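/- arXiv:1507.03029 — 4 statements merged into one kernel-verified Lean document; each statement's English description precedes it below -/
import Mathlib

section
/- Let $X \subseteq \mathbb{P}^m$ be an equidimensional projective variety defined over $\mathbb{F}_q$ of degree $\delta$ and dimension $n$. Then the number of $\mathbb{F}_q$-rational points of $X$ satisfies $|X(\mathbb{F}_q)| \le \delta \, p_n$, where $p_n = q^n + q^{n-1} + \cdots + q + 1$. -/
open MvPolynomial

/-- `pp q k` is the number of points of `ℙ^k(F_q)`, with the convention that it is `0`
for negative `k`. -/
noncomputable def pp (q : ℕ) (k : ℤ) : ℕ :=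
  if k < 0 then 0 else ∑ i ∈ Finset.range (k.toNat + 1), q ^ i

theorem MvPolynomial.height_eq_of_isMaximal {K : Type*} [Field K] (s : ℕ)
    (M : Ideal (MvPolynomial (Fin s) K)) [hM : M.IsMaximal] : M.height = s := by
  induction s with
  | zero =>
    have : M.height ≤ ringKrullDim (MvPolynomial (Fin 0) K) := Ideal.height_le_ringKrullDim_of_isPrime
    rw [MvPolynomial.ringKrullDim_of_isNoetherianRing, ringKrullDim_eq_zero_of_field] at this
    simpa using this
  | succ s ih =>
    let e := (finSuccEquiv K s).symm.toRingEquiv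
    let P : Ideal (Polynomial (MvPolynomial (Fin s) K)) := M.comap e
    have hP : P.IsMaximal := Ideal.comap_isMaximal_of_equiv e
    have : (P.under (MvPolynomial (Fin s) K)).IsMaximal :=
      Polynomial.isMaximal_comap_C_of_isJacobsonRing P
    have : P.LiesOver (P.under (MvPolynomial (Fin s) K)) := ⟨rfl⟩
    rw [← e.height_comap M, Polynomial.height_eq_height_add_one (P.under _) P, ih]
    simp

theorem ringKrullDim_le_of_isIntegral (R S : Type*) [CommRing R] [CommRing S] [Algebra R S]
    [Algebra.IsIntegral R S] : ringKrullDim S ≤ ringKrullDim R :=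
  Order.krullDim_le_of_strictMono (PrimeSpectrum.comap (algebraMap R S))
    fun _ _ h ↦ Ideal.IsIntegral.comap_lt_comap h

theorem ringKrullDim_le_of_isIntegral_of_injective (R S : Type*) [CommRing R] [CommRing S]
    [Algebra R S] [Algebra.IsIntegral R S] (h : Function.Injective (algebraMap R S)) :
    ringKrullDim R ≤ ringKrullDim S := by
  rcases subsingleton_or_nontrivial R with _ | _
  · rw [ringKrullDim_eq_bot_of_subsingleton]; exact bot_le
  refine iSup_le fun l ↦ ?_
  obtain ⟨Q, hQ, hQl⟩ := Ideal.exists_ideal_over_prime_of_isIntegral (S := S) l.head.asIdeal ⊥ (by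
    rw [← RingHom.ker_eq_comap_bot, (RingHom.injective_iff_ker_eq_bot _).mp h]; exact bot_le)
  have : Q.LiesOver l.head.asIdeal := ⟨hQl.2.symm⟩
  have := hQl.1
  obtain ⟨l', hl', -⟩ := Ideal.exists_ltSeries_of_hasGoingUp l Q
  rw [← hl']
  exact le_iSup (fun p : LTSeries (PrimeSpectrum S) ↦ (p.length : WithBot ℕ∞)) l'

theorem MvPolynomial.le_ringKrullDim_quotient_add_one {K : Type*} [Field K] {s : ℕ}
    (p : Ideal (MvPolynomial (Fin s) K)) [p.IsPrime] (hp : p.height ≤ 1) :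
    (s : WithBot ℕ∞) ≤ ringKrullDim (MvPolynomial (Fin s) K ⧸ p) + 1 := by
  obtain ⟨f, hf⟩ : ∃ f, p = Ideal.span {f} := by
    by_cases h0 : p = ⊥
    · exact ⟨0, by simp [h0]⟩
    · obtain ⟨f, hfp, hf⟩ := Ideal.IsPrime.exists_mem_prime_of_ne_bot ‹p.IsPrime› h0
      refine ⟨f, Ideal.eq_span_singleton_of_height_eq_one (le_antisymm hp ?_) hfp hf⟩
      rw [Order.one_le_iff_ne_zero, Ne, Ideal.height_eq_zero_iff_eq_bot]
      exact h0
  obtain ⟨M, hM, hpM⟩ := Ideal.exists_le_maximal p (Ideal.IsPrime.ne_top ‹_›)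
  have := Ideal.height_le_ringKrullDim_quotient_add_one (p := M) (r := f)
    (hpM (hf ▸ Ideal.mem_span_singleton_self f))
  rw [height_eq_of_isMaximal] at this
  rw [hf]
  exact_mod_cast this

theorem ringKrullDim_le_ringKrullDim_quotient_add_one_of_height_le_one (K : Type*) {A : Type*}
    [Field K] [CommRing A] [IsDomain A] [Algebra K A] [Algebra.FiniteType K A]
    (q : Ideal A) [q.IsPrime] (hq : q.height ≤ 1) :
    ringKrullDim A ≤ ringKrullDim (A ⧸ q) + 1 := by
  obtain ⟨s, g, hg, hgi⟩ := exists_integral_inj_algHom_of_fg K A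
  algebraize [g.toRingHom]
  have := Algebra.FiniteType.isNoetherianRing K A
  have : FaithfulSMul (MvPolynomial (Fin s) K) A := (faithfulSMul_iff_algebraMap_injective _ _).mpr hg
  have hp : (q.under (MvPolynomial (Fin s) K)).height ≤ 1 := by
    rw [Ideal.height_eq_height_add_of_liesOver_of_hasGoingDown
      (q.under (MvPolynomial (Fin s) K)) q] at hq
    exact le_self_add.trans hq
  calc ringKrullDim A ≤ ringKrullDim (MvPolynomial (Fin s) K) := ringKrullDim_le_of_isIntegral _ _
    _ = s := by
      rw [MvPolynomial.ringKrullDim_of_isNoetherianRing, ringKrullDim_eq_zero_of_field]; simp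
    _ ≤ _ := MvPolynomial.le_ringKrullDim_quotient_add_one _ hp
    _ ≤ _ := by
      gcongr
      exact ringKrullDim_le_of_isIntegral_of_injective _ _
        (Ideal.algebraMap_quotient_injective (I := q))

theorem ringKrullDim_quotient_le_of_mem_minimalPrimes_sup (K : Type*) {A : Type*}
    [Field K] [CommRing A] [Algebra K A] [Algebra.FiniteType K A]
    (P Q : Ideal A) [P.IsPrime] {f : A} (hQ : Q ∈ (P ⊔ Ideal.span {f}).minimalPrimes) :
    ringKrullDim (A ⧸ P) ≤ ringKrullDim (A ⧸ Q) + 1 := by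
  have hPQ : P ≤ Q := le_sup_left.trans hQ.1.2
  have := Algebra.FiniteType.isNoetherianRing K A
  have hQp := hQ.1.1
  have : (Q.map (Ideal.Quotient.mk P)).IsPrime :=
    Ideal.map_isPrime_of_surjective Ideal.Quotient.mk_surjective (by simpa using hPQ)
  refine (ringKrullDim_le_ringKrullDim_quotient_add_one_of_height_le_one K _
    (Ideal.map_height_le_one_of_mem_minimalPrimes hQ)).trans_eq ?_
  rw [ringKrullDim_eq_of_ringEquiv (DoubleQuot.quotQuotEquivQuotOfLE hPQ)]

open Filter Polynomial in
theorem Polynomial.leadingCoeff_nonneg_of_eventually {D : ℚ[X]}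
    (hD : ∀ᶠ j : ℕ in atTop, 0 ≤ D.eval (j : ℚ)) : 0 ≤ D.leadingCoeff := by
  by_contra! h
  rcases lt_or_ge 0 D.degree with hdeg | hdeg
  · have := ((D.tendsto_atBot_of_leadingCoeff_nonpos hdeg h.le).comp
      tendsto_natCast_atTop_atTop).eventually_lt_atBot (0 : ℚ)
    obtain ⟨j, hj, hj'⟩ := (hD.and this).exists
    exact hj.not_gt hj'
  · obtain ⟨j, hj⟩ := hD.exists
    rw [eq_C_of_degree_le_zero hdeg] at h hj
    simp only [eval_C, leadingCoeff_C] at h hj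
    exact hj.not_gt h

open Filter Polynomial Nat in
theorem Polynomial.le_leadingCoeff_of_eventually_mul_choose_le {P : ℚ[X]} {N p : ℚ} (hN : 0 ≤ N)
    {c : ℕ} (h : ∀ᶠ j : ℕ in atTop,
      N * (j + P.natDegree).choose P.natDegree ≤ p * P.eval ((j + c : ℕ) : ℚ)) :
    N ≤ p * P.natDegree ! * P.leadingCoeff := by
  set n := P.natDegree
  set D : ℚ[X] := C (p * n !) * taylor (c : ℚ) P - C N * Polynomial.X ^ n with hDdef
  have hcoeff : D.coeff n = p * n ! * P.leadingCoeff - N := by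
    rw [hDdef, coeff_sub, coeff_C_mul, coeff_C_mul_X_pow, coeff_taylor_natDegree, if_pos rfl]
  have hdeg : D.natDegree ≤ n :=
    (natDegree_sub_le_of_le ((natDegree_C_mul_le _ _).trans (natDegree_taylor _ _).le)
      (natDegree_C_mul_X_pow_le _ _)).trans_eq (max_self n)
  have hnonneg : 0 ≤ D.leadingCoeff := by
    refine leadingCoeff_nonneg_of_eventually (h.mono fun j hj ↦ ?_)
    have hchoose : (j : ℚ) ^ n ≤ n ! * (j + n).choose n := by
      have := (Nat.pow_le_pow_left (Nat.le_succ j) n).trans (Nat.pow_succ_le_ascFactorial (j + 1) n)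
      rw [Nat.ascFactorial_eq_factorial_mul_choose] at this
      exact_mod_cast this
    simp only [hDdef, eval_sub, eval_mul, eval_C, eval_pow, eval_X, taylor_eval, sub_nonneg]
    push_cast at hj
    calc N * (j : ℚ) ^ n ≤ N * (n ! * (j + n).choose n) := by gcongr
      _ = n ! * (N * (j + n).choose n) := by ring
      _ ≤ n ! * (p * P.eval ((j : ℚ) + c)) := by gcongr
      _ = _ := by ring
  rw [← sub_nonneg, ← hcoeff]
  rcases hdeg.lt_or_eq with hlt | heq
  · exact (coeff_eq_zero_of_natDegree_lt hlt).ge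
  · rwa [← heq]

namespace MvPolynomial

attribute [local instance] MvPolynomial.gradedAlgebra

section Homogeneous

variable {σ K : Type*} [Field K]

theorem exists_isHomogeneous_mem_notMem {P Q : Ideal (MvPolynomial σ K)}
    (hP : P.IsHomogeneous (homogeneousSubmodule σ K)) (h : ¬ P ≤ Q) :
    ∃ e, ∃ f : MvPolynomial σ K, f.IsHomogeneous e ∧ f ∈ P ∧ f ∉ Q := by
  obtain ⟨f, hfP, hfQ⟩ := SetLike.not_le_iff_exists.mp h
  obtain ⟨e, he⟩ : ∃ e, homogeneousComponent e f ∉ Q := by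
    by_contra! hc
    exact hfQ (by rw [← sum_homogeneousComponent f]; exact sum_mem fun e _ ↦ hc e)
  exact ⟨e, _, homogeneousComponent_isHomogeneous e f,
    (mem_iff_homogeneousComponent_mem hP f).mp hfP e, he⟩

theorem isHomogeneous_of_mem_minimalPrimes {I P : Ideal (MvPolynomial σ K)}
    (hI : I.IsHomogeneous (homogeneousSubmodule σ K)) (hP : P ∈ I.minimalPrimes) :
    P.IsHomogeneous (homogeneousSubmodule σ K) := by
  have hcore := Ideal.toIdeal_homogeneousCore_le (homogeneousSubmodule σ K) P
  have := hP.2 ⟨hP.1.1.homogeneousCore (𝒜 := homogeneousSubmodule σ K), by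
    rw [← hI.toIdeal_homogeneousCore_eq_self]
    exact Ideal.homogeneousCore_mono _ hP.1.2⟩ hcore
  rw [le_antisymm this hcore]
  exact HomogeneousIdeal.isHomogeneous _

end Homogeneous

section HilbertFunction

variable {σ K : Type*} [Finite σ] [Field K]

/-- The Hilbert function of the quotient of a polynomial ring by an ideal. -/
noncomputable def hilbertFun (I : Ideal (MvPolynomial σ K)) (j : ℕ) : ℕ :=
  Module.finrank K ↥(homogeneousSubmodule σ K j)
    - Module.finrank K ↥(Submodule.restrictScalars K I ⊓ homogeneousSubmodule σ K j)

instance finite_homogeneousSubmodule (j : ℕ) : Module.Finite K (homogeneousSubmodule σ K j) :=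
  Module.Finite.iff_fg.mpr (homogeneousSubmodule_fg σ K j)

theorem exists_disjoint_finrank_eq_hilbertFun (I : Ideal (MvPolynomial σ K)) (j : ℕ) :
    ∃ U ≤ homogeneousSubmodule σ K j, (∀ u ∈ U, u ∈ I → u = 0) ∧
      Module.finrank K U = hilbertFun I j := by
  set H := homogeneousSubmodule σ K j
  set J := Submodule.restrictScalars K I ⊓ H
  have hJH : J ≤ H := inf_le_right
  obtain ⟨V, hV⟩ := exists_isCompl J
  have hdisj : Disjoint J (V ⊓ H) := hV.disjoint.mono_right inf_le_left
  have hsup : J ⊔ V ⊓ H = H := by rw [← sup_inf_assoc_of_le V hJH, hV.sup_eq_top, top_inf_eq]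
  have : Module.Finite K J := Submodule.finiteDimensional_of_le hJH
  have : Module.Finite K ↥(V ⊓ H) := Submodule.finiteDimensional_of_le inf_le_right
  refine ⟨V ⊓ H, inf_le_right, fun u hu hI ↦ ?_, ?_⟩
  · exact Submodule.disjoint_def.mp hdisj u ⟨hI, hu.2⟩ hu
  · have h := Submodule.finrank_sup_add_finrank_inf_eq J (V ⊓ H)
    rw [hsup, hdisj.eq_bot, finrank_bot] at h
    change _ = Module.finrank K H - Module.finrank K J
    omega

theorem finrank_le_hilbertFun (I : Ideal (MvPolynomial σ K)) {j : ℕ} {U : Type*} [AddCommGroup U]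
    [Module K U] (φ : U →ₗ[K] MvPolynomial σ K)
    (hφ : ∀ u, φ u ∈ homogeneousSubmodule σ K j) (hI : ∀ u, φ u ∈ I → u = 0) :
    Module.finrank K U ≤ hilbertFun I j := by
  set H := homogeneousSubmodule σ K j
  set J := Submodule.restrictScalars K I ⊓ H
  have hJH : J ≤ H := inf_le_right
  have hRH : LinearMap.range φ ≤ H := by rintro _ ⟨u, rfl⟩; exact hφ u
  have hinj : Function.Injective φ :=
    (injective_iff_map_eq_zero φ).mpr fun u hu ↦ hI u (hu ▸ I.zero_mem)
  have hdisj : Disjoint J (LinearMap.range φ) := by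
    rw [Submodule.disjoint_def]
    rintro _ hx ⟨u, rfl⟩
    rw [hI u hx.1, map_zero]
  have : Module.Finite K J := Submodule.finiteDimensional_of_le hJH
  have : Module.Finite K (LinearMap.range φ) := Submodule.finiteDimensional_of_le hRH
  have h := Submodule.finrank_sup_add_finrank_inf_eq J (LinearMap.range φ)
  have h' := Submodule.finrank_mono (sup_le hJH hRH)
  rw [hdisj.eq_bot, finrank_bot, LinearMap.finrank_range_of_inj hinj] at h
  change _ ≤ Module.finrank K H - Module.finrank K J
  omega

theorem hilbertFun_add_hilbertFun_sup_span_le (P : Ideal (MvPolynomial σ K)) [P.IsPrime]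
    {f : MvPolynomial σ K} (hf : f.IsHomogeneous 1) (hfP : f ∉ P) (j : ℕ) :
    hilbertFun P j + hilbertFun (P ⊔ Ideal.span {f}) (j + 1) ≤ hilbertFun P (j + 1) := by
  obtain ⟨U, hUH, hUP, hU⟩ := exists_disjoint_finrank_eq_hilbertFun P j
  obtain ⟨V, hVH, hVP, hV⟩ := exists_disjoint_finrank_eq_hilbertFun (P ⊔ Ideal.span {f}) (j + 1)
  have : Module.Finite K U := Submodule.finiteDimensional_of_le hUH
  have : Module.Finite K V := Submodule.finiteDimensional_of_le hVH
  rw [← hU, ← hV, ← Module.finrank_prod]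
  refine finrank_le_hilbertFun P
    ((LinearMap.mulLeft K f ∘ₗ U.subtype).coprod V.subtype) (fun u ↦ ?_) fun u hu ↦ ?_
  · refine Submodule.add_mem _ ?_ (hVH u.2.2)
    have := hf.mul (hUH u.1.2)
    rwa [add_comm 1 j] at this
  · replace hu : f * (u.1 : MvPolynomial σ K) + u.2 ∈ P := hu
    have h2 : (u.2 : MvPolynomial σ K) = 0 := by
      refine hVP _ u.2.2 ?_
      have h1 : f * (u.1 : MvPolynomial σ K) ∈ P ⊔ Ideal.span {f} :=
        Ideal.mul_mem_right _ _ (Ideal.mem_sup_right (Ideal.mem_span_singleton_self f))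
      simpa using sub_mem (Ideal.mem_sup_left hu) h1
    rw [h2, add_zero] at hu
    have h1 := hUP _ u.1.2 ((‹P.IsPrime›.mem_or_mem hu).resolve_left hfP)
    exact Prod.ext (Subtype.ext h1) (Subtype.ext h2)

theorem exists_sum_hilbertFun_le {ι : Type*} [Fintype ι] (I : Ideal (MvPolynomial σ K))
    (P : ι → Ideal (MvPolynomial σ K)) (hIP : ∀ i, I ≤ P i) (hprime : ∀ i, (P i).IsPrime)
    (hhom : ∀ i, (P i).IsHomogeneous (homogeneousSubmodule σ K))
    (hP : Pairwise fun i k ↦ ¬ P i ≤ P k) (hX : ∀ i, ∃ k, X k ∉ P i) (c : ι → ℕ) :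
    ∃ d, ∀ j, ∑ i, hilbertFun (P i) (j + c i) ≤ hilbertFun I (j + d) := by
  classical
  have key : ∀ i, ∃ e, ∃ f : MvPolynomial σ K, f.IsHomogeneous e ∧ (∀ k ≠ i, f ∈ P k) ∧
      f ∉ P i := by
    intro i
    have := fun k : {k // k ≠ i} ↦ exists_isHomogeneous_mem_notMem (hhom k) (hP k.2)
    choose e f hf hfk hfi using this
    refine ⟨∑ k, e k, ∏ k, f k, IsHomogeneous.prod _ _ _ fun k _ ↦ hf k, fun k hk ↦ ?_, ?_⟩
    · exact Ideal.mem_of_dvd _ (Finset.dvd_prod_of_mem f (Finset.mem_univ ⟨k, hk⟩)) (hfk ⟨k, hk⟩)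
    · rw [(hprime i).prod_mem_iff]
      rintro ⟨k, -, hk⟩
      exact hfi k hk
  choose e f hf hfk hfi using key
  choose v hv using hX
  set d := ∑ i, (c i + e i)
  have hd : ∀ i, c i + e i ≤ d := fun i ↦
    Finset.single_le_sum (f := fun i ↦ c i + e i) (fun _ _ ↦ Nat.zero_le _) (Finset.mem_univ i)
  set t : ι → MvPolynomial σ K := fun i ↦ f i * X (v i) ^ (d - (c i + e i))
  have ht : ∀ i, (t i).IsHomogeneous (d - c i) := fun i ↦ by
    have := (hf i).mul ((isHomogeneous_X K (v i)).pow (d - (c i + e i)))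
    rwa [show e i + 1 * (d - (c i + e i)) = d - c i by have := hd i; omega] at this
  refine ⟨d, fun j ↦ ?_⟩
  choose U hUH hUP hU using fun i ↦ exists_disjoint_finrank_eq_hilbertFun (P i) (j + c i)
  have : ∀ i, Module.Finite K (U i) := fun i ↦ Submodule.finiteDimensional_of_le (hUH i)
  simp_rw [← hU]
  rw [← Module.finrank_pi_fintype]
  refine finrank_le_hilbertFun I
    (∑ i, LinearMap.mulLeft K (t i) ∘ₗ (U i).subtype ∘ₗ LinearMap.proj i) (fun u ↦ ?_) fun u hu ↦ ?_
  · rw [LinearMap.sum_apply]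
    refine Submodule.sum_mem _ fun i _ ↦ ?_
    have := (ht i).mul (hUH i (u i).2)
    rwa [show d - c i + (j + c i) = j + d by have := hd i; omega] at this
  · funext i
    have hu' : ∑ k, t k * (u k : MvPolynomial σ K) ∈ P i := by
      have := hIP i hu
      rwa [LinearMap.sum_apply] at this
    rw [← Finset.add_sum_erase _ _ (Finset.mem_univ i)] at hu'
    have hrest : ∑ k ∈ Finset.univ.erase i, t k * (u k : MvPolynomial σ K) ∈ P i :=
      sum_mem fun k hk ↦ Ideal.mul_mem_right _ _
        (Ideal.mul_mem_right _ _ (hfk k i (Finset.ne_of_mem_erase hk).symm))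
    have h := (Submodule.add_mem_iff_left _ hrest).mp hu'
    have hti : t i ∉ P i := fun h ↦ ((hprime i).mem_or_mem h).elim (hfi i)
      fun h ↦ hv i ((hprime i).mem_of_pow_mem _ h)
    exact Subtype.ext (hUP i _ (u i).2 (((hprime i).mem_or_mem h).resolve_left hti))

end HilbertFunction

section ProjectivePoints

variable {m : ℕ} {K : Type*} [Field K]

/-- The rational points of projective space at which all elements of an ideal vanish. -/
def projectiveZeros (I : Ideal (MvPolynomial (Fin (m + 1)) K)) :
    Set (Projectivization K (Fin (m + 1) → K)) :=
  {x | ∀ f ∈ I, eval x.rep f = 0}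

/-- The homogeneous prime ideal of a rational point of projective space. -/
noncomputable def pointIdeal (x : Projectivization K (Fin (m + 1) → K)) :
    Ideal (MvPolynomial (Fin (m + 1)) K) :=
  ((RingHom.ker (eval x.rep)).homogeneousCore (homogeneousSubmodule (Fin (m + 1)) K)).toIdeal

variable (x : Projectivization K (Fin (m + 1) → K))

theorem isHomogeneous_pointIdeal :
    (pointIdeal x).IsHomogeneous (homogeneousSubmodule (Fin (m + 1)) K) :=
  HomogeneousIdeal.isHomogeneous _

instance isPrime_pointIdeal : (pointIdeal x).IsPrime :=
  (RingHom.ker_isPrime (eval x.rep)).homogeneousCore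

theorem pointIdeal_le_ker : pointIdeal x ≤ RingHom.ker (eval x.rep) :=
  Ideal.toIdeal_homogeneousCore_le _ _

variable {x}

theorem mem_pointIdeal_iff_of_isHomogeneous {f : MvPolynomial (Fin (m + 1)) K} {e : ℕ}
    (hf : f.IsHomogeneous e) : f ∈ pointIdeal x ↔ eval x.rep f = 0 :=
  ⟨fun h ↦ pointIdeal_le_ker x h, fun h ↦ Ideal.mem_homogeneousCore_of_homogeneous_of_mem
    ⟨e, hf⟩ h⟩

theorem le_pointIdeal_of_mem_projectiveZeros {I : Ideal (MvPolynomial (Fin (m + 1)) K)}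
    (hI : I.IsHomogeneous (homogeneousSubmodule (Fin (m + 1)) K)) (hx : x ∈ projectiveZeros I) :
    I ≤ pointIdeal x := by
  rw [← hI.toIdeal_homogeneousCore_eq_self]
  exact Ideal.homogeneousCore_mono _ hx

variable (x) in
theorem exists_X_notMem_pointIdeal : ∃ k, X k ∉ pointIdeal x := by
  obtain ⟨k, hk⟩ := Function.ne_iff.mp x.rep_nonzero
  exact ⟨k, fun h ↦ hk (by simpa using pointIdeal_le_ker x h)⟩

theorem eq_of_pointIdeal_le {y : Projectivization K (Fin (m + 1) → K)}
    (h : pointIdeal x ≤ pointIdeal y) : x = y := by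
  have hxy : ∀ i k, x.rep i * y.rep k = x.rep k * y.rep i := fun i k ↦ by
    have hhom : (C (x.rep i) * X k - C (x.rep k) * X i :
        MvPolynomial (Fin (m + 1)) K).IsHomogeneous 1 :=
      (isHomogeneous_C_mul_X _ _).sub (isHomogeneous_C_mul_X _ _)
    have := pointIdeal_le_ker y (h ((mem_pointIdeal_iff_of_isHomogeneous hhom).mpr (by
      simp [mul_comm])))
    simpa [sub_eq_zero] using this
  obtain ⟨k, hk⟩ := Function.ne_iff.mp y.rep_nonzero
  rw [← x.mk_rep, ← y.mk_rep, Projectivization.mk_eq_mk_iff']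
  refine ⟨x.rep k / y.rep k, ?_⟩
  funext i
  have hk' : y.rep k ≠ 0 := hk
  simp only [Pi.smul_apply, smul_eq_mul]
  field_simp
  rw [hxy, mul_comm]

theorem projectiveZeros_subset_iUnion (I : Ideal (MvPolynomial (Fin (m + 1)) K)) :
    projectiveZeros I ⊆ ⋃ Q : I.minimalPrimes, projectiveZeros Q.1 := by
  intro x hx
  have := RingHom.ker_isPrime (eval x.rep)
  obtain ⟨Q, hQ, hQx⟩ := Ideal.exists_minimalPrimes_le (J := RingHom.ker (eval x.rep)) hx
  exact Set.mem_iUnion.mpr ⟨⟨Q, hQ⟩, hQx⟩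

variable [Finite K]

theorem ncard_projectiveZeros_le_hilbertFun {I : Ideal (MvPolynomial (Fin (m + 1)) K)}
    (hI : I.IsHomogeneous (homogeneousSubmodule (Fin (m + 1)) K)) :
    ∃ d, ∀ j, (projectiveZeros I).ncard ≤ hilbertFun I (j + d) := by
  have := Fintype.ofFinite (projectiveZeros I)
  obtain ⟨d, hd⟩ := exists_sum_hilbertFun_le I (fun x : projectiveZeros I ↦ pointIdeal x.1)
    (fun x ↦ le_pointIdeal_of_mem_projectiveZeros hI x.2) (fun x ↦ inferInstance)
    (fun x ↦ isHomogeneous_pointIdeal x.1)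
    (fun x y hxy h ↦ hxy (Subtype.ext (eq_of_pointIdeal_le h)))
    (fun x ↦ exists_X_notMem_pointIdeal x.1) (fun _ ↦ 0)
  refine ⟨d, fun j ↦ le_trans ?_ (hd j)⟩
  rw [← Nat.card_coe_set_eq, Nat.card_eq_fintype_card, ← Finset.card_univ, Finset.card_eq_sum_ones]
  refine Finset.sum_le_sum fun x _ ↦ ?_
  obtain ⟨k, hk⟩ := exists_X_notMem_pointIdeal x.1
  have hX : X k ^ j ∉ pointIdeal x.1 := fun h ↦ hk ((isPrime_pointIdeal x.1).mem_of_pow_mem _ h)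
  have := finrank_le_hilbertFun (j := j) (pointIdeal x.1)
    (LinearMap.toSpanSingleton K (MvPolynomial (Fin (m + 1)) K) (X k ^ j)) (fun a ↦ ?_) fun a ha ↦ ?_
  · simpa using this
  · refine Submodule.smul_mem _ a ?_
    simpa using (isHomogeneous_X K k).pow j
  · by_contra ha0
    refine hX ?_
    have := (Submodule.smul_mem_iff ((pointIdeal x.1).restrictScalars K) ha0).mp ha
    exact this

theorem ncard_projectiveZeros_mul_choose_le_of_minimalPrimes (n p : ℕ)
    {I : Ideal (MvPolynomial (Fin (m + 1)) K)}
    (hI : I.IsHomogeneous (homogeneousSubmodule (Fin (m + 1)) K))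
    (hX : ∀ Q ∈ I.minimalPrimes, ∃ k, X k ∉ Q)
    (h : ∀ Q ∈ I.minimalPrimes, ∃ c, ∀ j,
      (projectiveZeros Q).ncard * (j + n).choose n ≤ p * hilbertFun Q (j + c)) :
    ∃ c, ∀ j, (projectiveZeros I).ncard * (j + n).choose n ≤ p * hilbertFun I (j + c) := by
  have : Fintype I.minimalPrimes := I.finite_minimalPrimes_of_isNoetherianRing.fintype
  choose c hc using fun Q : I.minimalPrimes ↦ h Q.1 Q.2
  obtain ⟨d, hd⟩ := exists_sum_hilbertFun_le I (fun Q : I.minimalPrimes ↦ Q.1)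
    (fun Q ↦ Q.2.1.2) (fun Q ↦ Q.2.1.1) (fun Q ↦ isHomogeneous_of_mem_minimalPrimes hI Q.2)
    (fun Q R hQR hle ↦ hQR (Subtype.ext (le_antisymm hle (R.2.2 Q.2.1 hle))))
    (fun Q ↦ hX Q.1 Q.2) c
  have hcard : (projectiveZeros I).ncard ≤ ∑ Q : I.minimalPrimes, (projectiveZeros Q.1).ncard := by
    refine (Set.ncard_le_ncard (projectiveZeros_subset_iUnion I) (Set.toFinite _)).trans ?_
    simpa only [Finset.mem_univ, Set.iUnion_true] using
      Finset.set_ncard_biUnion_le Finset.univ fun Q : I.minimalPrimes ↦ projectiveZeros Q.1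
  refine ⟨d, fun j ↦ ?_⟩
  calc (projectiveZeros I).ncard * (j + n).choose n
      ≤ ∑ Q : I.minimalPrimes, (projectiveZeros Q.1).ncard * (j + n).choose n := by
        rw [← Finset.sum_mul]; gcongr
    _ ≤ ∑ Q : I.minimalPrimes, p * hilbertFun Q.1 (j + c Q) :=
        Finset.sum_le_sum fun Q _ ↦ hc Q j
    _ ≤ p * hilbertFun I (j + d) := by
        rw [← Finset.mul_sum]; gcongr; exact hd j

end ProjectivePoints

section LinearForms

variable {m : ℕ} {K : Type*} [Field K]

/-- The linear form with a given vector of coefficients. -/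
noncomputable def linearForm : (Fin (m + 1) → K) →ₗ[K] MvPolynomial (Fin (m + 1)) K :=
  Fintype.linearCombination K X

theorem linearForm_single (k : Fin (m + 1)) : linearForm (Pi.single k (1 : K)) = X k := by
  simp [linearForm, Fintype.linearCombination_apply_single]

theorem isHomogeneous_linearForm (a : Fin (m + 1) → K) : (linearForm a).IsHomogeneous 1 := by
  rw [linearForm, Fintype.linearCombination_apply]
  exact Submodule.sum_mem (homogeneousSubmodule _ K 1) fun i _ ↦
    Submodule.smul_mem (homogeneousSubmodule _ K 1) _ (isHomogeneous_X K i)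

theorem eval_linearForm (x a : Fin (m + 1) → K) : eval x (linearForm a) = a ⬝ᵥ x := by
  simp [linearForm, Fintype.linearCombination_apply, dotProduct, smul_eval]

/-- The coefficient vectors of the linear forms contained in an ideal. -/
noncomputable def linearForms (P : Ideal (MvPolynomial (Fin (m + 1)) K)) :
    Submodule K (Fin (m + 1) → K) :=
  (P.restrictScalars K).comap linearForm

theorem mem_linearForms {P : Ideal (MvPolynomial (Fin (m + 1)) K)} {a : Fin (m + 1) → K} :
    a ∈ linearForms P ↔ linearForm a ∈ P := Iff.rfl

theorem ringKrullDim_quotient_add_finrank_linearForms_le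
    (P : Ideal (MvPolynomial (Fin (m + 1)) K)) :
    ringKrullDim (MvPolynomial (Fin (m + 1)) K ⧸ P) + Module.finrank K (linearForms P) ≤
      (m + 1 : ℕ) := by
  obtain ⟨V, hV⟩ := exists_isCompl (linearForms P)
  have hdim := Submodule.finrank_add_eq_of_isCompl hV
  rw [Module.finrank_fin_fun] at hdim
  set r := Module.finrank K V
  let b := Module.finBasis K V
  let ψ : MvPolynomial (Fin r) K →ₐ[K] MvPolynomial (Fin (m + 1)) K ⧸ P :=
    (Ideal.Quotient.mkₐ K P).comp (aeval fun i ↦ linearForm (b i).1)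
  have hV : ∀ v ∈ V, Ideal.Quotient.mkₐ K P (linearForm v) ∈ ψ.range := by
    intro v hv
    refine ⟨∑ i, b.repr ⟨v, hv⟩ i • X i, ?_⟩
    have : v = ∑ i, b.repr ⟨v, hv⟩ i • (b i).1 := by
      have := congrArg (Submodule.subtype V) (b.sum_repr ⟨v, hv⟩)
      rw [map_sum] at this
      exact this.symm
    conv_rhs => rw [this]
    simp [ψ]
  have hX : ∀ k, Ideal.Quotient.mkₐ K P (X k) ∈ ψ.range := by
    intro k
    obtain ⟨w, hw, v, hv, hwv⟩ := Submodule.mem_sup.mp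
      (show Pi.single k (1 : K) ∈ linearForms P ⊔ V by simp [‹IsCompl _ V›.sup_eq_top])
    rw [← linearForm_single, ← hwv, map_add, map_add]
    have : Ideal.Quotient.mkₐ K P (linearForm w) = 0 := Ideal.Quotient.eq_zero_iff_mem.mpr hw
    rw [this, zero_add]
    exact hV v hv
  have hψ : Function.Surjective ψ := by
    rw [← AlgHom.range_eq_top, eq_top_iff,
      ← (AlgHom.range_eq_top _).mpr (Ideal.Quotient.mkₐ_surjective K P), ← Algebra.map_top,
      ← adjoin_range_X, AlgHom.map_adjoin, Algebra.adjoin_le_iff]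
    rintro _ ⟨_, ⟨k, rfl⟩, rfl⟩
    exact hX k
  have h := ringKrullDim_le_of_surjective ψ.toRingHom hψ
  rw [MvPolynomial.ringKrullDim_of_isNoetherianRing, ringKrullDim_eq_zero_of_field] at h
  calc ringKrullDim (MvPolynomial (Fin (m + 1)) K ⧸ P) + Module.finrank K (linearForms P)
      ≤ (r : WithBot ℕ∞) + Module.finrank K (linearForms P) := by
        gcongr
        simpa using h
    _ = (m + 1 : ℕ) := by
        rw [← Nat.cast_add, add_comm r]
        exact congrArg Nat.cast hdim

theorem exists_X_notMem_of_one_le_ringKrullDim {P : Ideal (MvPolynomial (Fin (m + 1)) K)}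
    (hP : 1 ≤ ringKrullDim (MvPolynomial (Fin (m + 1)) K ⧸ P)) : ∃ k, X k ∉ P := by
  by_contra! h
  have htop : linearForms P = ⊤ := by
    rw [eq_top_iff, ← (Pi.basisFun K (Fin (m + 1))).span_eq, Submodule.span_le]
    rintro _ ⟨k, rfl⟩
    simpa [mem_linearForms, linearForm_single] using h k
  have hdim := ringKrullDim_quotient_add_finrank_linearForms_le P
  rw [htop, finrank_top, Module.finrank_fin_fun] at hdim
  have : (1 : WithBot ℕ∞) + (m + 1 : ℕ) ≤ (m + 1 : ℕ) := (by gcongr : _ ≤ _).trans hdim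
  norm_cast at this
  omega

theorem projectiveZeros_sup_span_linearForm (P : Ideal (MvPolynomial (Fin (m + 1)) K))
    (a : Fin (m + 1) → K) :
    projectiveZeros (P ⊔ Ideal.span {linearForm a}) =
      {x ∈ projectiveZeros P | a ⬝ᵥ x.rep = 0} := by
  ext x
  change P ⊔ Ideal.span {linearForm a} ≤ RingHom.ker (eval x.rep) ↔
    P ≤ RingHom.ker (eval x.rep) ∧ _
  rw [sup_le_iff, Ideal.span_singleton_le_iff_mem, RingHom.mem_ker, eval_linearForm]

theorem natCard_dotProduct_eq_zero {x : Fin (m + 1) → K} (hx : x ≠ 0) :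
    Nat.card {a : Fin (m + 1) → K // a ⬝ᵥ x = 0} = Nat.card K ^ m := by
  let φ : (Fin (m + 1) → K) →ₗ[K] K := Fintype.linearCombination K x
  have hφ : ∀ a, φ a = a ⬝ᵥ x := fun a ↦ by simp [φ, Fintype.linearCombination_apply, dotProduct]
  have hφ0 : φ ≠ 0 := by
    obtain ⟨k, hk⟩ := Function.ne_iff.mp hx
    intro h
    exact hk (by simpa [φ, Fintype.linearCombination_apply_single] using
      LinearMap.congr_fun h (Pi.single k 1))
  have h := LinearMap.finrank_range_add_finrank_ker φ
  rw [LinearMap.range_eq_top.mpr (LinearMap.surjective hφ0), finrank_top, Module.finrank_self,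
    Module.finrank_fin_fun, add_comm, Nat.add_right_cancel_iff] at h
  trans Nat.card (LinearMap.ker φ)
  swap
  · rw [Module.natCard_eq_pow_finrank (K := K), h]
  exact Nat.card_congr (Equiv.subtypeEquivRight fun a ↦ by rw [LinearMap.mem_ker, hφ])

variable [Finite K]

theorem exists_ncard_mul_le_ncard_hyperplane_section_mul
    {P : Ideal (MvPolynomial (Fin (m + 1)) K)} (hP : ∃ k, X k ∉ P) :
    ∃ a, linearForm a ∉ P ∧
      (projectiveZeros P).ncard *
          (Nat.card K ^ m - Nat.card K ^ Module.finrank K (linearForms P)) ≤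
        (Nat.card K ^ (m + 1) - Nat.card K ^ Module.finrank K (linearForms P)) *
          (projectiveZeros (P ⊔ Ideal.span {linearForm a})).ncard := by
  classical
  have := Fintype.ofFinite K
  have := Fintype.ofFinite (Projectivization K (Fin (m + 1) → K))
  set Z := (projectiveZeros P).toFinset
  set W : Finset (Fin (m + 1) → K) := {a | a ∈ linearForms P}
  have hW : W.card = Nat.card K ^ Module.finrank K (linearForms P) := by
    rw [← Module.natCard_eq_pow_finrank, Nat.card_eq_fintype_card, Fintype.card_subtype]
  have hWc : Wᶜ.card = Nat.card K ^ (m + 1) - Nat.card K ^ Module.finrank K (linearForms P) := by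
    rw [Finset.card_compl, hW]
    simp [Nat.card_eq_fintype_card]
  have hne : Wᶜ.Nonempty := by
    obtain ⟨k, hk⟩ := hP
    refine ⟨Pi.single k 1, ?_⟩
    simpa [W, mem_linearForms, linearForm_single] using hk
  obtain ⟨a, haW, ha⟩ := Wᶜ.exists_max_image (fun a ↦ {x ∈ Z | a ⬝ᵥ x.rep = 0}.card) hne
  have hcard : ∀ a, (projectiveZeros (P ⊔ Ideal.span {linearForm a})).ncard =
      {x ∈ Z | a ⬝ᵥ x.rep = 0}.card := fun a ↦ by
    rw [projectiveZeros_sup_span_linearForm, ← Set.ncard_coe_finset]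
    congr 1
    ext x
    simp [Z]
  refine ⟨a, by simpa [W, mem_linearForms] using haW, ?_⟩
  have hx : ∀ x ∈ Z, {a ∈ Wᶜ | a ⬝ᵥ x.rep = 0}.card =
      Nat.card K ^ m - Nat.card K ^ Module.finrank K (linearForms P) := fun x hx ↦ by
    rw [← hW, ← natCard_dotProduct_eq_zero x.rep_nonzero, Nat.card_eq_fintype_card,
      Fintype.card_subtype, ← Finset.card_sdiff_of_subset]
    · congr 1
      ext a
      simp [and_comm]
    · intro a ha
      have haP : linearForm a ∈ P := by simpa [W, mem_linearForms] using ha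
      have hxP : x ∈ projectiveZeros P := by simpa [Z] using hx
      simpa [eval_linearForm] using hxP _ haP
  calc (projectiveZeros P).ncard *
          (Nat.card K ^ m - Nat.card K ^ Module.finrank K (linearForms P))
      = ∑ x ∈ Z, {a ∈ Wᶜ | a ⬝ᵥ x.rep = 0}.card := by
        rw [Finset.sum_congr rfl hx, Finset.sum_const, smul_eq_mul, Set.ncard_eq_toFinset_card']
    _ = ∑ a ∈ Wᶜ, {x ∈ Z | a ⬝ᵥ x.rep = 0}.card :=
        Finset.sum_card_bipartiteAbove_eq_sum_card_bipartiteBelow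
          fun (x : Projectivization K (Fin (m + 1) → K)) a ↦ a ⬝ᵥ x.rep = 0
    _ ≤ _ := by
        rw [hcard, ← hWc, ← smul_eq_mul]
        exact Finset.sum_le_card_nsmul _ _ _ ha

end LinearForms

section PointCount

variable {m : ℕ} {K : Type*} [Field K] [Finite K]

theorem geom_sum_mul_le_of_mul_pow_sub_le {q : ℕ} (hq : 2 ≤ q) {N M m n w : ℕ} (h : n + 1 + w ≤ m)
    (hNM : N * (q ^ m - q ^ w) ≤ (q ^ (m + 1) - q ^ w) * M) :
    N * ∑ i ∈ Finset.range (n + 1), q ^ i ≤ (∑ i ∈ Finset.range (n + 2), q ^ i) * M := by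
  set S := ∑ i ∈ Finset.range (n + 1), q ^ i with hS
  have hSq : (S : ℤ) * (q - 1) = q ^ (n + 1) - 1 := by
    rw [hS]
    push_cast
    exact geom_sum_mul _ _
  have hlt : q ^ w < q ^ m := Nat.pow_lt_pow_right (by omega) (by omega)
  have hle : q ^ w ≤ q ^ (m + 1) := Nat.pow_le_pow_right (by omega) (by omega)
  have hBR : q ^ (n + 1) * q ^ w ≤ q ^ m := by
    rw [← pow_add]; exact Nat.pow_le_pow_right (by omega) h
  rw [Finset.sum_range_succ, ← hS]
  have key : (q ^ (m + 1) - q ^ w) * S ≤ (q ^ m - q ^ w) * (S + q ^ (n + 1)) := by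
    zify [hlt.le, hle] at hBR ⊢
    rw [pow_succ (q : ℤ) m]
    linear_combination hBR + (q : ℤ) ^ m * hSq
  refine Nat.le_of_mul_le_mul_left ?_ (Nat.sub_pos_of_lt hlt)
  calc _ = N * (q ^ m - q ^ w) * S := by ring
    _ ≤ (q ^ (m + 1) - q ^ w) * M * S := by gcongr
    _ = (q ^ (m + 1) - q ^ w) * S * M := by ring
    _ ≤ (q ^ m - q ^ w) * (S + q ^ (n + 1)) * M := by gcongr
    _ = _ := by ring

theorem mul_choose_le_of_hyperplane_section {F G : ℕ → ℕ} (hFG : ∀ j, F j + G (j + 1) ≤ F (j + 1))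
    {M n p c : ℕ} (hG : ∀ j, M * (j + n).choose n ≤ p * G (j + c)) (j : ℕ) :
    M * (j + (n + 1)).choose (n + 1) ≤ p * F (j + (c + 1)) := by
  have hstep : ∀ j, M * (j + 1 + n).choose n + p * F (j + c) ≤ p * F (j + (c + 1)) := fun j ↦
    calc M * (j + 1 + n).choose n + p * F (j + c)
        ≤ p * G (j + 1 + c) + p * F (j + c) := Nat.add_le_add_right (hG (j + 1)) _
      _ = p * (F (j + c) + G (j + c + 1)) := by rw [add_right_comm]; ring
      _ ≤ p * F (j + (c + 1)) := by gcongr; exact hFG _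
  induction j with
  | zero =>
    have := hstep 0
    have h1 : 1 ≤ (0 + 1 + n).choose n := Nat.choose_pos (by omega)
    simp only [zero_add, Nat.choose_self] at *
    nlinarith
  | succ j ih =>
    have := hstep (j + 1)
    rw [show j + 1 + (n + 1) = (j + 1 + n) + 1 by ring, Nat.choose_succ_succ]
    have h2 : (j + 1 + n).choose n ≤ (j + 1 + 1 + n).choose n := Nat.choose_le_choose _ (by omega)
    rw [show j + (n + 1) = j + 1 + n by ring, show j + (c + 1) = j + 1 + c by ring] at ih
    nlinarith

/-- A lower bound for the Hilbert function of a homogeneous prime ideal in terms of its number of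
rational points. -/
theorem exists_ncard_projectiveZeros_mul_choose_le (n : ℕ)
    {P : Ideal (MvPolynomial (Fin (m + 1)) K)} [P.IsPrime]
    (hhom : P.IsHomogeneous (homogeneousSubmodule (Fin (m + 1)) K))
    (hdim : (n + 1 : ℕ) ≤ ringKrullDim (MvPolynomial (Fin (m + 1)) K ⧸ P)) :
    ∃ c, ∀ j, (projectiveZeros P).ncard * (j + n).choose n ≤
      (∑ i ∈ Finset.range (n + 1), Nat.card K ^ i) * hilbertFun P (j + c) := by
  induction n generalizing P with
  | zero => simpa using ncard_projectiveZeros_le_hilbertFun hhom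
  | succ n ih =>
    obtain ⟨a, haP, ha⟩ := exists_ncard_mul_le_ncard_hyperplane_section_mul
      (exists_X_notMem_of_one_le_ringKrullDim (le_trans (by norm_cast; omega) hdim))
    have ha' := isHomogeneous_linearForm a
    set J := P ⊔ Ideal.span {linearForm a}
    have hJ : J.IsHomogeneous (homogeneousSubmodule (Fin (m + 1)) K) :=
      hhom.sup (Ideal.homogeneous_span _ _ (by rintro _ rfl; exact ⟨1, ha'⟩))
    have hJdim : ∀ Q ∈ J.minimalPrimes,
        (n + 1 : ℕ) ≤ ringKrullDim (MvPolynomial (Fin (m + 1)) K ⧸ Q) := fun Q hQ ↦ by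
      have := hdim.trans (ringKrullDim_quotient_le_of_mem_minimalPrimes_sup K P Q hQ)
      rw [Nat.cast_add_one (n + 1)] at this
      exact ENat.WithBot.add_le_add_one_right_iff.mp this
    obtain ⟨c, hc⟩ := ncard_projectiveZeros_mul_choose_le_of_minimalPrimes n
      (∑ i ∈ Finset.range (n + 1), Nat.card K ^ i) hJ
      (fun Q hQ ↦ exists_X_notMem_of_one_le_ringKrullDim
        (le_trans (by norm_cast; omega) (hJdim Q hQ)))
      fun Q hQ ↦ have := hQ.1.1; ih (isHomogeneous_of_mem_minimalPrimes hJ hQ) (hJdim Q hQ)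
    have hw : n + 1 + Module.finrank K (linearForms P) ≤ m := by
      have : ((n + 1 + 1 : ℕ) : WithBot ℕ∞) + Module.finrank K (linearForms P) ≤ (m + 1 : ℕ) :=
        le_trans (by gcongr) (ringKrullDim_quotient_add_finrank_linearForms_le P)
      norm_cast at this
      omega
    have hq : 2 ≤ Nat.card K := Finite.one_lt_card
    refine ⟨c + 1, fun j ↦ ?_⟩
    have h1 := geom_sum_mul_le_of_mul_pow_sub_le hq hw ha
    have h2 := mul_choose_le_of_hyperplane_section
      (hilbertFun_add_hilbertFun_sup_span_le P ha' haP) hc j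
    have hp : 0 < ∑ i ∈ Finset.range (n + 1), Nat.card K ^ i :=
      Finset.sum_pos (fun i _ ↦ by positivity) (by simp)
    refine Nat.le_of_mul_le_mul_left ?_ hp
    calc _ = ((projectiveZeros P).ncard * ∑ i ∈ Finset.range (n + 1), Nat.card K ^ i) *
          (j + (n + 1)).choose (n + 1) := by ring
      _ ≤ ((∑ i ∈ Finset.range (n + 2), Nat.card K ^ i) * (projectiveZeros J).ncard) *
          (j + (n + 1)).choose (n + 1) := by gcongr
      _ = (∑ i ∈ Finset.range (n + 2), Nat.card K ^ i) * ((projectiveZeros J).ncard *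
          (j + (n + 1)).choose (n + 1)) := by ring
      _ ≤ (∑ i ∈ Finset.range (n + 2), Nat.card K ^ i) *
          ((∑ i ∈ Finset.range (n + 1), Nat.card K ^ i) * hilbertFun P (j + (c + 1))) := by gcongr
      _ = _ := by ring

theorem exists_ncard_projectiveZeros_mul_choose_le_of_minimalPrimes (n : ℕ)
    {I : Ideal (MvPolynomial (Fin (m + 1)) K)}
    (hI : I.IsHomogeneous (homogeneousSubmodule (Fin (m + 1)) K))
    (hdim : ∀ Q ∈ I.minimalPrimes,
      (n + 1 : ℕ) ≤ ringKrullDim (MvPolynomial (Fin (m + 1)) K ⧸ Q)) :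
    ∃ c, ∀ j, (projectiveZeros I).ncard * (j + n).choose n ≤
      (∑ i ∈ Finset.range (n + 1), Nat.card K ^ i) * hilbertFun I (j + c) :=
  ncard_projectiveZeros_mul_choose_le_of_minimalPrimes n _ hI
    (fun Q hQ ↦ exists_X_notMem_of_one_le_ringKrullDim
      (le_trans (by norm_cast; omega) (hdim Q hQ)))
    fun Q hQ ↦ have := hQ.1.1
      exists_ncard_projectiveZeros_mul_choose_le n (isHomogeneous_of_mem_minimalPrimes hI hQ)
        (hdim Q hQ)

end PointCount

end MvPolynomial

/-- Lachaud's bound: an equidimensional projective variety `X ⊆ ℙ^m` over `F_q` of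
dimension `n` and degree `δ` has at most `δ · p_n` rational points.  Here `X = V(I)`
for a homogeneous ideal `I`; equidimensionality is expressed by all minimal primes of
`I` having cone dimension `n+1`, and the dimension `n` and degree `δ` are encoded by
the Hilbert polynomial `P` of `I`, which has degree `n` and leading coefficient
`δ / n!`. -/
theorem lachaud_bound (q m n δ : ℕ) {K : Type} [Field K] [Fintype K]
    (hq : Fintype.card K = q)
    (I : Ideal (MvPolynomial (Fin (m + 1)) K))
    (hhomgen : ∃ S : Set (MvPolynomial (Fin (m + 1)) K),
      (∀ f ∈ S, ∃ e, f.IsHomogeneous e) ∧ I = Ideal.span S)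
    (hequi : ∀ P ∈ I.minimalPrimes,
      ringKrullDim ((MvPolynomial (Fin (m + 1)) K) ⧸ P) = ((n + 1 : ℕ) : WithBot ℕ∞))
    (P : Polynomial ℚ) (hPdeg : P.natDegree = n)
    (hPlead : P.leadingCoeff = (δ : ℚ) / (Nat.factorial n : ℚ))
    (hhilb : ∃ j₀ : ℕ, ∀ j ≥ j₀, P.eval (j : ℚ) =
      ((Module.finrank K ↥(MvPolynomial.homogeneousSubmodule (Fin (m + 1)) K j)
        - Module.finrank K
            ↥(Submodule.restrictScalars K I ⊓ MvPolynomial.homogeneousSubmodule (Fin (m + 1)) K j)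
        : ℕ) : ℚ)) :
    Set.ncard {x : Projectivization K (Fin (m + 1) → K) | ∀ f ∈ I, eval x.rep f = 0}
      ≤ δ * pp q (n : ℤ) := by
  obtain ⟨S, hS, hIS⟩ := hhomgen
  obtain ⟨j₀, hj₀⟩ := hhilb
  let := gradedAlgebra (R := K) (σ := Fin (m + 1))
  have hI : I.IsHomogeneous (homogeneousSubmodule (Fin (m + 1)) K) :=
    hIS ▸ Ideal.homogeneous_span _ S hS
  obtain ⟨c, hc⟩ := exists_ncard_projectiveZeros_mul_choose_le_of_minimalPrimes n hI
    fun Q hQ ↦ (hequi Q hQ).ge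
  have hpp : pp q n = ∑ i ∈ Finset.range (n + 1), Nat.card K ^ i := by
    simp [pp, ← hq]
  rw [← hpp] at hc
  have h := Polynomial.le_leadingCoeff_of_eventually_mul_choose_le (P := P) (c := c)
    (N := (projectiveZeros I).ncard) (p := pp q n) (Nat.cast_nonneg _) <| by
      filter_upwards [Filter.eventually_ge_atTop j₀] with j hj
      rw [hj₀ _ (hj.trans (Nat.le_add_right j c)), hPdeg]
      exact_mod_cast hc j
  rw [hPlead, hPdeg, mul_assoc, mul_div_cancel₀ _ (by positivity)] at h
  rw [mul_comm]
  exact_mod_cast h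
end

section
/- Assume $r \le m+1$ and $1 < d \le q$. If $F_1, \dots, F_r$ are linearly independent homogeneous polynomials of degree $d$ in $\mathbb{F}_q[x_0,\dots,x_m]$ having a common linear factor, then the number of their common zeros in $\mathbb{P}^m(\mathbb{F}_q)$ is at most $(d-1)q^{m-1} + p_{m-2} + \lfloor q^{m-r} \rfloor$. -/
open MvPolynomial

/-- `flq q m r` is `⌊q^(m-r)⌋`: `q^(m-r)` for `r ≤ m` and `0` otherwise. -/
noncomputable def flq (q m r : ℕ) : ℕ := if r ≤ m then q ^ (m - r) else 0

/-- The exponent vectors in the box `[0, q)^m` that are not above any member of `M`. -/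
def footprint (q : ℕ) {m : ℕ} (M : Finset (Fin m → ℕ)) : Finset (Fin m → Fin q) :=
  {a | ∀ μ ∈ M, ∃ i, (a i : ℕ) < μ i}

/-- The slice of the footprint of `M` at zeroth coordinate `t`. -/
def footprintSlice (q : ℕ) {m : ℕ} (M : Finset (Fin (m + 1) → ℕ)) (t : ℕ) :
    Finset (Fin m → Fin q) :=
  {b | ∀ μ ∈ M, t < μ 0 ∨ ∃ i, (b i : ℕ) < μ i.succ}

/-- The tails of the members of `M` with zeroth coordinate `u`. -/
def tailsAt {m : ℕ} (M : Finset (Fin (m + 1) → ℕ)) (u : ℕ) : Finset (Fin m → ℕ) :=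
  ({μ ∈ M | μ 0 = u} : Finset _).image Fin.tail

lemma mem_footprint {q m : ℕ} {M : Finset (Fin m → ℕ)} {a : Fin m → Fin q} :
    a ∈ footprint q M ↔ ∀ μ ∈ M, ∃ i, (a i : ℕ) < μ i := by
  simp [footprint]

lemma mem_footprintSlice {q m : ℕ} {M : Finset (Fin (m + 1) → ℕ)} {t : ℕ} {b : Fin m → Fin q} :
    b ∈ footprintSlice q M t ↔ ∀ μ ∈ M, t < μ 0 ∨ ∃ i, (b i : ℕ) < μ i.succ := by
  simp [footprintSlice]

lemma mem_tailsAt {m : ℕ} {M : Finset (Fin (m + 1) → ℕ)} {u : ℕ} {ν : Fin m → ℕ} :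
    ν ∈ tailsAt M u ↔ (Fin.cons u ν : Fin (m + 1) → ℕ) ∈ M := by
  simp only [tailsAt, Finset.mem_image, Finset.mem_filter]
  constructor
  · rintro ⟨μ, ⟨hμ, rfl⟩, rfl⟩
    rwa [Fin.cons_self_tail]
  · intro h
    exact ⟨_, ⟨h, Fin.cons_zero _ _⟩, Fin.tail_cons _ _⟩

lemma tail_mem_tailsAt {m : ℕ} {M : Finset (Fin (m + 1) → ℕ)} {μ : Fin (m + 1) → ℕ}
    (h : μ ∈ M) : Fin.tail μ ∈ tailsAt M (μ 0) := by
  rwa [mem_tailsAt, Fin.cons_self_tail]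

lemma card_tailsAt {m : ℕ} (M : Finset (Fin (m + 1) → ℕ)) (u : ℕ) :
    (tailsAt M u).card = ({μ ∈ M | μ 0 = u} : Finset _).card := by
  refine Finset.card_image_of_injOn fun μ hμ ν hν h => ?_
  simp only [Finset.coe_filter, Set.mem_ofPred_eq] at hμ hν
  rw [← Fin.cons_self_tail μ, ← Fin.cons_self_tail ν, h, hμ.2, hν.2]

lemma add_sum_le_of_mem_tailsAt {m e u : ℕ} {M : Finset (Fin (m + 1) → ℕ)}
    (hM : ∀ μ ∈ M, ∑ i, μ i ≤ e) {ν : Fin m → ℕ} (hν : ν ∈ tailsAt M u) :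
    u + ∑ i, ν i ≤ e := by
  simpa [Fin.sum_univ_succ] using hM _ (mem_tailsAt.1 hν)

lemma footprint_anti {q m : ℕ} {M M' : Finset (Fin m → ℕ)} (h : M' ⊆ M) :
    footprint q M ⊆ footprint q M' := fun _ ha =>
  mem_footprint.2 fun μ hμ => mem_footprint.1 ha μ (h hμ)

lemma footprintSlice_subset {q m t u : ℕ} (M : Finset (Fin (m + 1) → ℕ)) (h : u ≤ t) :
    footprintSlice q M t ⊆ footprint q (tailsAt M u) := fun b hb =>
  mem_footprint.2 fun ν hν => by
    have := mem_footprintSlice.1 hb _ (mem_tailsAt.1 hν)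
    simp only [Fin.cons_zero, Fin.cons_succ] at this
    exact this.resolve_left (by omega)

lemma card_footprint_succ (q : ℕ) {m : ℕ} (M : Finset (Fin (m + 1) → ℕ)) :
    (footprint q M).card = ∑ t ∈ Finset.range q, (footprintSlice q M t).card := by
  rw [Finset.sum_range, ← Finset.card_sigma]
  refine Finset.card_bij' (fun a _ => ⟨a 0, Fin.tail a⟩) (fun x _ => Fin.cons x.1 x.2)
    ?_ ?_ ?_ ?_
  · intro a ha
    simp only [Finset.mem_sigma, Finset.mem_univ, true_and, mem_footprintSlice]
    intro μ hμ
    obtain ⟨i, hi⟩ := mem_footprint.1 ha μ hμ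
    cases i using Fin.cases with
    | zero => exact Or.inl hi
    | succ i => exact Or.inr ⟨i, hi⟩
  · intro x hx
    simp only [Finset.mem_sigma, Finset.mem_univ, true_and, mem_footprintSlice] at hx
    refine mem_footprint.2 fun μ hμ => ?_
    rcases hx μ hμ with h | ⟨i, h⟩
    · exact ⟨0, by simpa using h⟩
    · exact ⟨i.succ, by simpa using h⟩
  · intro a _
    exact Fin.cons_self_tail a
  · rintro ⟨t, b⟩ _
    simp

lemma flq_succ_succ (q m r : ℕ) : flq q (m + 1) (r + 1) = flq q m r := by
  simp [flq]

lemma mul_flq_le (q m r : ℕ) : q * flq q m r ≤ flq q (m + 1) r := by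
  unfold flq
  split_ifs with h₁ h₂
  · rw [← pow_succ', show m - r + 1 = m + 1 - r by omega]
  · omega
  all_goals simp

lemma pow_mul_flq_le (q m r : ℕ) : q ^ r * flq q m r ≤ q ^ m := by
  unfold flq
  split_ifs with h
  · rw [← pow_add, Nat.add_sub_cancel' h]
  · simp

lemma flq_anti {q : ℕ} (hq : 1 ≤ q) (m : ℕ) {r s : ℕ} (h : r ≤ s) : flq q m s ≤ flq q m r := by
  unfold flq
  split_ifs
  · exact Nat.pow_le_pow_right hq (by omega)
  all_goals omega

lemma sum_range_le_of_le {q t A B : ℕ} {N : ℕ → ℕ} (htq : t ≤ q)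
    (hA : ∀ i < t, N i ≤ A) (hB : ∀ i, t ≤ i → N i ≤ B) :
    ∑ i ∈ Finset.range q, N i ≤ t * A + (q - t) * B := by
  rw [← Finset.sum_range_add_sum_Ico _ htq]
  refine Nat.add_le_add ?_ ?_
  · simpa using Finset.sum_le_card_nsmul (Finset.range t) N A (by simpa using hA)
  · simpa using Finset.sum_le_card_nsmul (Finset.Ico t q) N B
      (fun i hi => hB i (Finset.mem_Ico.1 hi).1)

/-- The footprint bound in `m` variables: the footprint of `r ≤ m + 1` exponent vectors of degree
at most `e < q` has at most `(e - 1) q^(m - 1) + ⌊q^(m - r)⌋` elements. -/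
def FootprintBound (q m : ℕ) : Prop :=
  ∀ (e : ℕ) (M : Finset (Fin m → ℕ)), 1 ≤ e → e < q → (∀ μ ∈ M, ∑ i, μ i ≤ e) →
    M.Nonempty → M.card ≤ m + 1 →
    q * (footprint q M).card ≤ (e - 1) * q ^ m + q * flq q m M.card

lemma FootprintBound.of_le_card {q m : ℕ} (ih : FootprintBound q m) {e k : ℕ}
    {M : Finset (Fin m → ℕ)} (he : 1 ≤ e) (heq : e < q) (hM : ∀ μ ∈ M, ∑ i, μ i ≤ e)
    (hk : 1 ≤ k) (hkm : k ≤ m + 1) (hkM : k ≤ M.card) :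
    q * (footprint q M).card ≤ (e - 1) * q ^ m + q * flq q m k := by
  obtain ⟨M', hM', rfl⟩ := Finset.exists_subset_card_eq hkM
  exact (Nat.mul_le_mul_left q (Finset.card_le_card (footprint_anti hM'))).trans
    (ih e M' he heq (fun μ hμ => hM μ (hM' hμ)) (Finset.card_pos.1 hk) hkm)

lemma FootprintBound.slice {q m : ℕ} (ih : FootprintBound q m) {e k t u : ℕ}
    {M : Finset (Fin (m + 1) → ℕ)} (heq : e < q) (hM : ∀ μ ∈ M, ∑ i, μ i ≤ e)
    (hut : u ≤ t) (hue : u < e)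
    (hk : 1 ≤ k) (hkm : k ≤ m + 1) (hkM : k ≤ (tailsAt M u).card) :
    q * (footprintSlice q M t).card ≤ (e - u - 1) * q ^ m + q * flq q m k :=
  (Nat.mul_le_mul_left q (Finset.card_le_card (footprintSlice_subset M hut))).trans
    (ih.of_le_card (by omega) (by omega)
      (fun ν hν => by have := add_sum_le_of_mem_tailsAt hM hν; omega) hk hkm hkM)

lemma mul_flq_le_pow (q m : ℕ) {k : ℕ} (hq : 1 ≤ q) (hk : 1 ≤ k) : q * flq q m k ≤ q ^ m := by
  have := Nat.mul_le_mul_left q (flq_anti hq m hk)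
  have h₁ := pow_mul_flq_le q m 1
  rw [pow_one] at h₁
  omega

lemma FootprintBound.slice_of_nonempty {q m : ℕ} (ih : FootprintBound q m) {e t u : ℕ}
    {M : Finset (Fin (m + 1) → ℕ)} (heq : e < q) (hM : ∀ μ ∈ M, ∑ i, μ i ≤ e)
    (hut : u ≤ t) (hu : (tailsAt M u).Nonempty) :
    q * (footprintSlice q M t).card ≤ (e - u) * q ^ m := by
  obtain ⟨ν, hν⟩ := hu
  have hsum := add_sum_le_of_mem_tailsAt hM hν
  rcases Nat.lt_or_ge u e with hue | hue
  · have h₁ := ih.slice heq hM hut hue le_rfl (by omega) (Finset.card_pos.2 ⟨ν, hν⟩)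
    have h₂ := mul_flq_le_pow q m (k := 1) (by omega) le_rfl
    obtain ⟨c, rfl⟩ := Nat.exists_eq_add_of_lt hue
    rw [show u + c + 1 - u - 1 = c by omega] at h₁
    rw [show u + c + 1 - u = c + 1 by omega, add_mul, one_mul]
    omega
  · have hempty : footprintSlice q M t = ∅ := by
      refine Finset.eq_empty_of_forall_notMem fun b hb => ?_
      obtain ⟨i, hi⟩ := mem_footprint.1 (footprintSlice_subset M hut hb) ν hν
      have := Finset.single_le_sum (f := ν) (fun i _ => Nat.zero_le _) (Finset.mem_univ i)
      omega
    simp [hempty]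

lemma sum_range_le_of_le_of_le {q t₁ t₂ A B C : ℕ} {N : ℕ → ℕ} (h₁₂ : t₁ ≤ t₂) (htq : t₂ ≤ q)
    (hA : ∀ i < t₁, N i ≤ A) (hB : ∀ i, t₁ ≤ i → N i ≤ B) (hC : ∀ i, t₂ ≤ i → N i ≤ C) :
    ∑ i ∈ Finset.range q, N i ≤ t₁ * A + (t₂ - t₁) * B + (q - t₂) * C := by
  rw [← Finset.sum_range_add_sum_Ico _ htq]
  refine Nat.add_le_add (sum_range_le_of_le h₁₂ hA hB) ?_
  simpa using Finset.sum_le_card_nsmul (Finset.Ico t₂ q) N C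
    (fun i hi => hC i (Finset.mem_Ico.1 hi).1)

lemma card_tailsAt_le_one {m e : ℕ} {M : Finset (Fin (m + 1) → ℕ)}
    (hM : ∀ μ ∈ M, ∑ i, μ i ≤ e) : (tailsAt M e).card ≤ 1 := by
  refine Finset.card_le_one.2 fun ν hν ν' hν' => ?_
  have h := add_sum_le_of_mem_tailsAt hM hν
  have h' := add_sum_le_of_mem_tailsAt hM hν'
  funext i
  have := Finset.single_le_sum (f := ν) (fun i _ => Nat.zero_le _) (Finset.mem_univ i)
  have := Finset.single_le_sum (f := ν') (fun i _ => Nat.zero_le _) (Finset.mem_univ i)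
  omega

lemma card_le_add_card_tailsAt {m u v : ℕ} {M : Finset (Fin (m + 1) → ℕ)}
    (h : ∀ μ ∈ M, μ 0 = u ∨ μ 0 = v) :
    M.card ≤ (tailsAt M u).card + (tailsAt M v).card := by
  rw [card_tailsAt, card_tailsAt]
  refine (Finset.card_le_card fun μ hμ => ?_).trans (Finset.card_union_le _ _)
  simpa [hμ] using h μ hμ

/-- The case of the footprint bound where every zeroth exponent vanishes. -/
lemma FootprintBound.succ_of_forall_eq_zero {q m : ℕ} (ih : FootprintBound q m) {e : ℕ}
    {M : Finset (Fin (m + 1) → ℕ)} (he : 1 ≤ e) (heq : e < q) (hM : ∀ μ ∈ M, ∑ i, μ i ≤ e)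
    (hne : M.Nonempty) (hcard : M.card ≤ m + 2) (h0 : ∀ μ ∈ M, μ 0 = 0) :
    q * (footprint q M).card ≤ (e - 1) * q ^ (m + 1) + q * flq q (m + 1) M.card := by
  have hc : (tailsAt M 0).card = M.card := by
    rw [card_tailsAt, Finset.filter_true_of_mem h0]
  have hpos := Finset.card_pos.2 hne
  obtain ⟨k, hk, hkm, hkM, hf⟩ : ∃ k, 1 ≤ k ∧ k ≤ m + 1 ∧ k ≤ M.card ∧
      q * flq q m k ≤ flq q (m + 1) M.card := by
    rcases Nat.lt_or_ge (m + 1) M.card with h | h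
    · exact ⟨m + 1, by omega, le_rfl, by omega, by simp [flq]⟩
    · exact ⟨M.card, hpos, h, le_rfl, mul_flq_le _ _ _⟩
  have h := sum_range_le_of_le (N := fun t => q * (footprintSlice q M t).card) (Nat.zero_le q)
    (A := 0) (by simp)
    (fun i _ => ih.slice heq hM (Nat.zero_le i) he hk hkm (hc.symm ▸ hkM))
  rw [card_footprint_succ, Finset.mul_sum]
  refine h.trans ?_
  have := Nat.mul_le_mul_left q hf
  rw [pow_succ]
  simp only [Nat.sub_zero, Nat.zero_mul, zero_add, mul_add]
  nlinarith

/-- The case of the footprint bound where some, but not all, zeroth exponents vanish. -/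
lemma FootprintBound.succ_of_exists_of_exists {q m : ℕ} (ih : FootprintBound q m) {e : ℕ}
    {M : Finset (Fin (m + 1) → ℕ)} (heq : e < q) (hM : ∀ μ ∈ M, ∑ i, μ i ≤ e)
    (hcard : M.card ≤ m + 2) (h0 : ∃ μ ∈ M, μ 0 = 0) (h1 : ∃ μ ∈ M, μ 0 ≠ 0) :
    q * (footprint q M).card ≤ (e - 1) * q ^ (m + 1) + q * flq q (m + 1) M.card := by
  classical
  have hex : ∃ t, t ≠ 0 ∧ (tailsAt M t).Nonempty := by
    obtain ⟨μ, hμ, h⟩ := h1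
    exact ⟨μ 0, h, _, tail_mem_tailsAt hμ⟩
  obtain ⟨t, ⟨ht0, htne⟩, hmin⟩ : ∃ t, (t ≠ 0 ∧ (tailsAt M t).Nonempty) ∧
      ∀ μ ∈ M, μ 0 = 0 ∨ t ≤ μ 0 := by
    refine ⟨Nat.find hex, Nat.find_spec hex, fun μ hμ => ?_⟩
    by_contra! h
    exact Nat.find_min hex h.2 ⟨h.1, _, tail_mem_tailsAt hμ⟩
  have hte : t ≤ e := by
    obtain ⟨ν, hν⟩ := htne
    have := add_sum_le_of_mem_tailsAt hM hν
    omega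
  have hle : ∀ μ ∈ M, μ 0 ≤ e := fun μ hμ =>
    (Finset.single_le_sum (fun i _ => Nat.zero_le _) (Finset.mem_univ 0)).trans (hM μ hμ)
  have h0ne : (tailsAt M 0).Nonempty := by
    obtain ⟨μ, hμ, h⟩ := h0
    exact ⟨_, h ▸ tail_mem_tailsAt hμ⟩
  have hr0 := Finset.card_pos.2 h0ne
  have hr0M : (tailsAt M 0).card < M.card := by
    rw [card_tailsAt]
    refine Finset.card_lt_card (Finset.filter_ssubset.2 ?_)
    obtain ⟨μ, hμ, h⟩ := h1
    exact ⟨μ, hμ, h⟩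
  rw [card_footprint_succ, Finset.mul_sum, pow_succ]
  set Q := q ^ m
  set r₀ := (tailsAt M 0).card
  set F := flq q (m + 1) M.card
  set f := q * flq q m r₀ with hf
  have hfQ : f ≤ Q := mul_flq_le_pow q m (by omega) hr0
  have hA : ∀ i, q * (footprintSlice q M i).card ≤ (e - 1) * Q + f := fun i =>
    ih.slice heq hM (Nat.zero_le i) (by omega) hr0 (by omega) le_rfl
  have hB : ∀ i, t ≤ i → q * (footprintSlice q M i).card ≤ (e - t) * Q := fun i hi =>
    ih.slice_of_nonempty heq hM hi htne
  -- A bound by the slices below and above `t` suffices when `t * f` is small.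
  have key : t * f ≤ (q - t) * (t - 1) * Q + q * F →
      ∑ i ∈ Finset.range q, q * (footprintSlice q M i).card ≤ (e - 1) * (Q * q) + q * F := by
    intro hkey
    refine (sum_range_le_of_le (hte.trans heq.le) (fun i _ => hA i) hB).trans ?_
    obtain ⟨s, rfl⟩ := Nat.exists_eq_succ_of_ne_zero ht0
    obtain ⟨c, rfl⟩ := Nat.exists_eq_add_of_le hte
    obtain ⟨g, rfl⟩ := Nat.exists_eq_add_of_lt heq
    simp only [Nat.succ_eq_add_one] at hkey ⊢
    rw [show s + 1 + c + g + 1 - (s + 1) = c + g + 1 by omega] at hkey ⊢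
    rw [show s + 1 - 1 = s by omega] at hkey
    rw [show s + 1 + c - 1 = s + c by omega, show s + 1 + c - (s + 1) = c by omega]
    nlinarith
  by_cases hr : M.card = r₀ + 1
  · refine key ?_
    have hfF : f = q * F := by rw [hf, ← flq_succ_succ, ← hr]
    have : (t - 1) * f ≤ (q - t) * (t - 1) * Q := by
      rw [mul_comm (q - t), mul_assoc]
      refine Nat.mul_le_mul_left _ (hfQ.trans ?_)
      exact Nat.le_mul_of_pos_left _ (by omega)
    obtain ⟨s, rfl⟩ := Nat.exists_eq_succ_of_ne_zero ht0
    simp only [Nat.succ_eq_add_one, Nat.add_sub_cancel] at this ⊢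
    rw [add_mul, one_mul]
    omega
  by_cases ht1 : t = 1
  · subst ht1
    rcases Nat.lt_or_ge 1 (tailsAt M 1).card with hr1 | hr1
    · have he2 : 1 < e := by
        rcases Nat.lt_or_ge 1 e with h | h
        · exact h
        · have := card_tailsAt_le_one hM
          rw [show e = 1 by omega] at this
          omega
      have hm : 1 ≤ m := by
        by_contra! hm
        obtain rfl : m = 0 := by omega
        have : (tailsAt M 1).card ≤ 1 := Finset.card_le_one.2 fun a _ b _ => Subsingleton.elim a b
        omega
      have hC : ∀ i, 1 ≤ i →
          q * (footprintSlice q M i).card ≤ (e - 1 - 1) * Q + q * flq q m 2 := fun i hi =>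
        ih.slice heq hM hi he2 (by omega) (by omega) hr1
      refine (sum_range_le_of_le (hte.trans heq.le) (fun i _ => hA i) hC).trans ?_
      have h2 : q ^ 2 * flq q m 2 ≤ Q := pow_mul_flq_le q m 2
      obtain ⟨c, rfl⟩ := Nat.exists_eq_add_of_lt he2
      obtain ⟨g, rfl⟩ := Nat.exists_eq_add_of_lt heq
      rw [show 1 + c + 1 + g + 1 - 1 = c + g + 2 by omega, show 1 + c + 1 - 1 - 1 = c by omega,
        show 1 + c + 1 - 1 = c + 1 by omega]
      have hx : (c + g + 2) * ((1 + c + 1 + g + 1) * flq (1 + c + 1 + g + 1) m 2) ≤ Q :=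
        le_trans (by nlinarith) h2
      nlinarith
    · obtain ⟨μ, hμ, hμ0, hμ1⟩ : ∃ μ ∈ M, μ 0 ≠ 0 ∧ μ 0 ≠ 1 := by
        by_contra! h
        have := card_le_add_card_tailsAt (u := 0) (v := 1) (M := M) fun μ hμ => by
          by_cases h' : μ 0 = 0
          · exact Or.inl h'
          · exact Or.inr (h μ hμ h')
        omega
      have hμe := hle μ hμ
      have hC : ∀ i, μ 0 ≤ i → q * (footprintSlice q M i).card ≤ (e - μ 0) * Q := fun i hi =>
        ih.slice_of_nonempty heq hM hi ⟨_, tail_mem_tailsAt hμ⟩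
      generalize μ 0 = s at *
      refine (sum_range_le_of_le_of_le (show 1 ≤ s by omega) (by omega)
        (fun i _ => hA i) hB hC).trans ?_
      obtain ⟨s, rfl⟩ := Nat.exists_eq_add_of_le (show 2 ≤ s by omega)
      obtain ⟨c, rfl⟩ := Nat.exists_eq_add_of_le hμe
      obtain ⟨g, rfl⟩ := Nat.exists_eq_add_of_lt heq
      rw [show 2 + s + c - 1 = s + c + 1 by omega, show 2 + s - 1 = s + 1 by omega,
        show 2 + s + c + g + 1 - (2 + s) = c + g + 1 by omega,
        show 2 + s + c - (2 + s) = c by omega]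
      nlinarith [Nat.zero_le (s * g * Q), Nat.zero_le (s * c * Q), Nat.zero_le (g * Q),
        Nat.zero_le (c * Q), Nat.zero_le (s * Q), Nat.zero_le F]
  · have htq : t + 2 ≤ q := by
      by_contra! h
      have := card_le_add_card_tailsAt (u := 0) (v := e) (M := M) fun μ hμ => by
        have := hmin μ hμ
        have := hle μ hμ
        omega
      have := card_tailsAt_le_one hM
      omega
    refine key ((Nat.mul_le_mul_left t hfQ).trans ?_)
    obtain ⟨s, rfl⟩ := Nat.exists_eq_add_of_le (show 2 ≤ t by omega)
    obtain ⟨g, rfl⟩ := Nat.exists_eq_add_of_le htq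
    rw [show 2 + s + 2 + g - (2 + s) = g + 2 by omega, show 2 + s - 1 = s + 1 by omega]
    nlinarith [Nat.zero_le (s * g * Q), Nat.zero_le (g * Q), Nat.zero_le (s * Q),
      Nat.zero_le ((2 + s + 2 + g) * F)]

/-- The case of the footprint bound where no zeroth exponent vanishes, by lowering all of them. -/
lemma footprint_succ_of_forall_ne_zero {q m e : ℕ} {M : Finset (Fin (m + 1) → ℕ)}
    (he : 1 ≤ e) (heq : e < q) (hM : ∀ μ ∈ M, ∑ i, μ i ≤ e) (hne : M.Nonempty)
    (h0 : ∀ μ ∈ M, μ 0 ≠ 0)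
    (ih : ∀ M' : Finset (Fin (m + 1) → ℕ), 1 ≤ e - 1 → (∀ μ ∈ M', ∑ i, μ i ≤ e - 1) →
      M'.card = M.card →
      q * (footprint q M').card ≤ (e - 1 - 1) * q ^ (m + 1) + q * flq q (m + 1) M'.card) :
    q * (footprint q M).card ≤ (e - 1) * q ^ (m + 1) + q * flq q (m + 1) M.card := by
  classical
  have hslice : (footprintSlice q M 0).card ≤ q ^ m := by
    refine (Finset.card_le_univ _).trans ?_
    simp
  obtain ⟨p, rfl⟩ := Nat.exists_eq_succ_of_ne_zero (show q ≠ 0 by omega)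
  set lower : (Fin (m + 1) → ℕ) → Fin (m + 1) → ℕ := fun μ => Fin.cons (μ 0 - 1) (Fin.tail μ)
  have hlower : ∀ μ ∈ M, ∑ i, lower μ i ≤ e - 1 := fun μ hμ => by
    have h₁ := hM μ hμ
    have h₂ := h0 μ hμ
    rw [Fin.sum_univ_succ] at h₁ ⊢
    simp only [lower, Fin.cons_zero, Fin.cons_succ, Fin.tail]
    omega
  have hinj : Set.InjOn lower M := fun μ hμ ν hν h => by
    have h₁ := h0 μ hμ
    have h₂ := h0 ν hν
    obtain ⟨h₃, h₄⟩ := Fin.cons_inj.1 h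
    rw [← Fin.cons_self_tail μ, ← Fin.cons_self_tail ν, h₄, show μ 0 = ν 0 by omega]
  have hcard : (M.image lower).card = M.card := Finset.card_image_of_injOn hinj
  have hstep : ∀ t, footprintSlice (p + 1) M (t + 1) = footprintSlice (p + 1) (M.image lower) t :=
    fun t => by
      ext b
      simp only [mem_footprintSlice, Finset.forall_mem_image, lower, Fin.cons_zero, Fin.cons_succ,
        Fin.tail]
      refine forall₂_congr fun μ hμ => or_congr_left ?_
      have := h0 μ hμ
      omega
  have hsum : (footprint (p + 1) M).card
      ≤ (footprint (p + 1) (M.image lower)).card + (p + 1) ^ m := by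
    rw [card_footprint_succ, card_footprint_succ, Finset.sum_range_succ', Finset.sum_range_succ]
    simp only [Nat.succ_eq_add_one] at hslice
    simp only [hstep]
    omega
  have hM' : ∀ μ ∈ M.image lower, ∑ i, μ i ≤ e - 1 := by
    simpa only [Finset.forall_mem_image] using hlower
  rcases Nat.lt_or_ge 1 e with h | h
  · have h' := ih (M.image lower) (by omega) hM' hcard
    rw [hcard] at h'
    obtain ⟨c, rfl⟩ := Nat.exists_eq_add_of_lt h
    rw [show 1 + c + 1 - 1 = c + 1 by omega]
    rw [show 1 + c + 1 - 1 - 1 = c by omega] at h'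
    rw [pow_succ] at h' ⊢
    simp only [Nat.succ_eq_add_one] at *
    nlinarith
  · obtain rfl : e = 1 := by omega
    have hz : ∀ μ ∈ M.image lower, μ = 0 := fun μ hμ => by
      funext i
      have := (Finset.single_le_sum (f := μ) (fun i _ => Nat.zero_le _)
        (Finset.mem_univ i)).trans (hM' μ hμ)
      simpa using this
    have hempty : footprint (p + 1) (M.image lower) = ∅ := by
      refine Finset.eq_empty_of_forall_notMem fun b hb => ?_
      obtain ⟨μ, hμ⟩ := hne.image lower
      obtain ⟨i, hi⟩ := mem_footprint.1 hb μ hμ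
      simp [hz μ hμ] at hi
    have hone : M.card = 1 := by
      refine le_antisymm ?_ (Finset.card_pos.2 hne)
      rw [← hcard]
      exact Finset.card_le_one.2 fun μ hμ ν hν => (hz μ hμ).trans (hz ν hν).symm
    rw [hempty, Finset.card_empty, zero_add] at hsum
    have hflq : flq (p + 1) (m + 1) M.card = (p + 1) ^ m := by simp [flq, hone]
    simpa [hflq] using hsum

theorem footprintBound (q m : ℕ) : FootprintBound q m := by
  induction m with
  | zero =>
    intro e M _ _ _ hne _
    have hempty : footprint q M = ∅ := by
      refine Finset.eq_empty_of_forall_notMem fun b hb => ?_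
      obtain ⟨μ, hμ⟩ := hne
      obtain ⟨i, _⟩ := mem_footprint.1 hb μ hμ
      exact i.elim0
    simp [hempty]
  | succ m ih =>
    intro e
    induction e with
    | zero => intro M h; omega
    | succ e ihe =>
      intro M he heq hM hne hcard
      by_cases h0 : ∃ μ ∈ M, μ 0 = 0
      · by_cases h1 : ∃ μ ∈ M, μ 0 ≠ 0
        · exact ih.succ_of_exists_of_exists heq hM hcard h0 h1
        · push Not at h1
          exact ih.succ_of_forall_eq_zero he heq hM hne hcard h1
      · push Not at h0
        refine footprint_succ_of_forall_ne_zero he heq hM hne h0 fun M' he' hM' hc => ?_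
        exact ihe M' he' (by omega) hM' (Finset.card_pos.1 (hc ▸ Finset.card_pos.2 hne))
          (hc.trans_le hcard)

/-- The footprint bound: if every member of `M` is the leading exponent of a polynomial vanishing
on `X`, then `X` has no more points than the footprint of `M`. -/
lemma card_le_card_footprint {K : Type*} [Field K] [Fintype K] {m : ℕ}
    (ord : MonomialOrder (Fin m)) (X : Finset (Fin m → K)) (M : Finset (Fin m → ℕ))
    (hM : ∀ μ ∈ M, ∃ f : MvPolynomial (Fin m) K, f ≠ 0 ∧ ⇑(ord.degree f) = μ ∧
      ∀ x ∈ X, eval x f = 0) :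
    X.card ≤ (footprint (Fintype.card K) M).card := by
  classical
  set q := Fintype.card K
  let ev : MvPolynomial (Fin m) K →ₗ[K] (X → K) :=
    LinearMap.pi fun x => (MvPolynomial.aeval (x : Fin m → K)).toLinearMap
  have hev : ∀ p x, ev p x = eval (x : Fin m → K) p := fun p x => by
    simp [ev, MvPolynomial.aeval_eq_eval]
  let std : (Fin m → Fin q) → (X → K) := fun a =>
    ev (monomial (Finsupp.equivFunOnFinite.symm fun i => (a i : ℕ)) 1)
  set S := Submodule.span K (std '' (footprint q M : Set (Fin m → Fin q)))
  have hlower : ∀ p : MvPolynomial (Fin m) K, (∀ κ ∈ p.support, ev (monomial κ 1) ∈ S) →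
      ev p ∈ S := fun p hp => by
    rw [p.as_sum, map_sum]
    refine Submodule.sum_mem _ fun κ hκ => ?_
    rw [← mul_one (coeff κ p), ← smul_eq_mul, ← smul_monomial, map_smul]
    exact S.smul_mem _ (hp κ hκ)
  have hmon : ∀ ν : Fin m →₀ ℕ, ev (monomial ν 1) ∈ S := by
    intro ν
    induction hn : ord.toSyn ν using WellFoundedLT.induction generalizing ν with
    | ind n ih =>
    subst hn
    by_cases hbig : ∃ i, q ≤ ν i
    · obtain ⟨i, hi⟩ := hbig
      have hq : 1 < q := Fintype.one_lt_card
      obtain ⟨κ, rfl⟩ : ∃ κ, ν = κ + Finsupp.single i q :=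
        ⟨ν - Finsupp.single i q, (tsub_add_cancel_of_le (Finsupp.single_le_iff.2 hi)).symm⟩
      have hlt : κ + Finsupp.single i 1 < κ + Finsupp.single i q := by
        gcongr
        exact lt_of_le_of_ne (Finsupp.single_mono hq.le)
          fun h => hq.ne (Finsupp.single_injective i h)
      have := ih _ (ord.toSyn_strictMono hlt) (κ + Finsupp.single i 1) rfl
      convert this using 1
      funext x
      rw [hev, hev, monomial_add_single, monomial_add_single]
      simp [FiniteField.pow_card, q]
    push Not at hbig
    by_cases hstd : (fun i => ⟨ν i, hbig i⟩ : Fin m → Fin q) ∈ footprint q M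
    · refine Submodule.subset_span ⟨_, hstd, ?_⟩
      simp only [std]
      congr 2
      ext i
      simp
    · simp only [mem_footprint, not_forall, not_exists, not_lt] at hstd
      obtain ⟨_, hμ, hle⟩ := hstd
      obtain ⟨f, hf, rfl, hfX⟩ := hM _ hμ
      obtain ⟨κ, rfl⟩ : ∃ κ, ν = κ + ord.degree f :=
        ⟨ν - ord.degree f, (tsub_add_cancel_of_le (fun i => hle i)).symm⟩
      set p := monomial κ (1 : K) * f with hp
      have hcoeff : coeff (κ + ord.degree f) p = ord.leadingCoeff f := by
        rw [hp, coeff_monomial_mul, one_mul]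
        rfl
      have hlc : ord.leadingCoeff f ≠ 0 := ord.leadingCoeff_ne_zero_iff.2 hf
      have hdeg : ord.degree p = κ + ord.degree f := by
        rw [hp, ord.degree_mul (by simp) hf, ord.degree_monomial]
        simp
      have hpz : ev p = 0 := by
        funext x
        simp [hev, hp, hfX x x.2]
      have hrest : ev (p - monomial (κ + ord.degree f) (ord.leadingCoeff f)) ∈ S := by
        refine hlower _ fun τ hτ => ?_
        have hne : τ ≠ κ + ord.degree f := by
          rintro rfl
          simp [hcoeff] at hτ
        refine ih _ (lt_of_le_of_ne ?_ fun h => hne (ord.toSyn.injective h)) τ rfl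
        rw [← hdeg]
        refine ord.le_degree ?_
        simpa [coeff_monomial, hne.symm] using hτ
      rw [map_sub, hpz, zero_sub, Submodule.neg_mem_iff, ← mul_one (ord.leadingCoeff f),
        ← smul_eq_mul, ← smul_monomial, map_smul] at hrest
      exact (Submodule.smul_mem_iff _ hlc).1 hrest
  have htop : S = ⊤ := by
    rw [eq_top_iff]
    intro g _
    obtain ⟨p, hp⟩ : ∃ p : MvPolynomial (Fin m) K, ∀ x : X, eval (x : Fin m → K) p = g x := by
      let g' : (Fin m → K) → K := fun x => if h : x ∈ X then g ⟨x, h⟩ else 0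
      obtain ⟨p, -, hp⟩ :
          g' ∈ (restrictDegree (Fin m) K (Fintype.card K - 1)).map (evalₗ K (Fin m)) :=
        map_restrict_dom_evalₗ K (Fin m) ▸ Submodule.mem_top
      refine ⟨p, fun x => ?_⟩
      have := congrFun hp x
      simpa [g', MvPolynomial.evalₗ_apply] using this
    rw [show g = ev p from funext fun x => by rw [hev, hp]]
    exact hlower p fun κ _ => hmon κ
  calc X.card = Module.finrank K (X → K) := by simp
    _ = Module.finrank K S := by rw [htop, finrank_top]
    _ ≤ (footprint q M).card := by
      rw [← Set.ncard_coe_finset]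
      refine le_trans ?_ (Set.ncard_image_le (f := std) (Set.toFinite _))
      rw [Set.ncard_eq_toFinset_card']
      exact finrank_span_le_card _

/-- The **Heijnen–Pellikaan bound**: `r ≤ m + 1` linearly independent polynomials of degree at
most `e < q` in `m` variables have at most `(e - 1) q^(m - 1) + ⌊q^(m - r)⌋` common zeros. -/
theorem card_common_zeros_le {K : Type*} [Field K] [Fintype K] {m r e : ℕ} (hr : 1 ≤ r)
    (hrm : r ≤ m + 1) (he : 1 ≤ e) (heq : e < Fintype.card K)
    (f : Fin r → MvPolynomial (Fin m) K) (hf : LinearIndependent K f)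
    (hdeg : ∀ i, (f i).totalDegree ≤ e) (X : Finset (Fin m → K))
    (hX : ∀ x ∈ X, ∀ i, eval x (f i) = 0) :
    Fintype.card K * X.card
      ≤ (e - 1) * Fintype.card K ^ m + Fintype.card K * flq (Fintype.card K) m r := by
  classical
  let ord : MonomialOrder (Fin m) := MonomialOrder.lex
  let L : Finset (Fin m →₀ ℕ) := {ν ∈ Finset.univ.biUnion fun i => (f i).support |
    ∃ c : Fin r → K, ∑ i, c i • f i ≠ 0 ∧ ord.degree (∑ i, c i • f i) = ν}
  have hrL : r ≤ L.card := by
    let φ : (Fin r → K) →ₗ[K] (L → K) :=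
      LinearMap.pi fun ν => lcoeff K ν.1 ∘ₗ Fintype.linearCombination K f
    have hφ : Function.Injective φ := by
      rw [← LinearMap.ker_eq_bot, LinearMap.ker_eq_bot']
      intro c hc
      by_contra hne
      have hsum : ∑ i, c i • f i ≠ 0 := fun h =>
        hne (funext (Fintype.linearIndependent_iff.1 hf c h))
      have hlead := ord.coeff_degree_ne_zero_iff.2 hsum
      have hmem : ord.degree (∑ i, c i • f i) ∈ L := by
        refine Finset.mem_filter.2 ⟨?_, c, hsum, rfl⟩
        simp only [Finset.mem_biUnion, Finset.mem_univ, true_and, mem_support_iff]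
        by_contra! h
        refine hlead ?_
        rw [coeff_sum]
        exact Finset.sum_eq_zero fun i _ => by rw [coeff_smul, h i, smul_zero]
      have hcoeff : coeff _ (Fintype.linearCombination K f c) = 0 := congrFun hc ⟨_, hmem⟩
      rw [Fintype.linearCombination_apply] at hcoeff
      exact hlead hcoeff
    simpa using LinearMap.finrank_le_finrank_of_injective hφ
  let M : Finset (Fin m → ℕ) := L.map ⟨_, DFunLike.coe_injective⟩
  have hcard : X.card ≤ (footprint (Fintype.card K) M).card := by
    refine card_le_card_footprint ord X M fun μ hμ => ?_
    obtain ⟨ν, hν, rfl⟩ := Finset.mem_map.1 hμ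
    obtain ⟨-, c, hc, rfl⟩ := Finset.mem_filter.1 hν
    refine ⟨_, hc, rfl, fun x hx => ?_⟩
    rw [map_sum]
    exact Finset.sum_eq_zero fun i _ => by rw [smul_eval, hX x hx i, mul_zero]
  refine (Nat.mul_le_mul_left _ hcard).trans ((footprintBound _ m).of_le_card he heq
    (fun μ hμ => ?_) hr hrm (by simpa [M] using hrL))
  obtain ⟨ν, hν, rfl⟩ := Finset.mem_map.1 hμ
  obtain ⟨hν, -⟩ := Finset.mem_filter.1 hν
  obtain ⟨i, -, hi⟩ := Finset.mem_biUnion.1 hν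
  refine le_trans (le_of_eq ?_) ((le_totalDegree hi).trans (hdeg i))
  simp [Finsupp.sum_fintype]

lemma totalDegree_bind₁_le {K σ τ : Type*} [CommSemiring K] (s : σ → MvPolynomial τ K)
    (hs : ∀ i, (s i).totalDegree ≤ 1) (p : MvPolynomial σ K) :
    (bind₁ s p).totalDegree ≤ p.totalDegree := by
  rw [bind₁, aeval_def, eval₂_eq]
  refine totalDegree_finsetSum_le fun ν hν => ?_
  refine (totalDegree_mul _ _).trans ?_
  rw [algebraMap_eq, totalDegree_C, zero_add]
  refine (totalDegree_finsetProd _ _).trans ((Finset.sum_le_sum fun i _ => ?_).trans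
    (le_totalDegree hν))
  exact (totalDegree_pow _ _).trans (by simpa using Nat.mul_le_mul_left (ν i) (hs i))

/-- The points of an affine hyperplane `∑ i, a i * x i = 1` are recovered from all but one of
their coordinates by polynomials of degree at most one. -/
lemma exists_affine_chart {K : Type*} [Field K] {m : ℕ} {a : Fin (m + 1) → K} (ha : a ≠ 0) :
    ∃ (ρ : (Fin (m + 1) → K) → Fin m → K) (s : Fin (m + 1) → MvPolynomial (Fin m) K),
      (∀ i, (s i).totalDegree ≤ 1) ∧
      ∀ x, ∑ i, a i * x i = 1 → ∀ i, eval (ρ x) (s i) = x i := by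
  obtain ⟨k, hk⟩ := Function.ne_iff.1 ha
  replace hk : a k ≠ 0 := hk
  refine ⟨fun x => k.removeNth x,
    k.insertNth (C (a k)⁻¹ * (1 - ∑ j, C (a (k.succAbove j)) * X j)) X, fun i => ?_,
    fun x hx i => ?_⟩
  · cases i using k.succAboveCases with
    | x =>
      rw [Fin.insertNth_apply_same]
      refine (totalDegree_mul _ _).trans ?_
      rw [totalDegree_C, zero_add]
      refine (totalDegree_sub _ _).trans (max_le (by simp) ?_)
      refine totalDegree_finsetSum_le fun j _ => (totalDegree_mul _ _).trans ?_
      simp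
    | p j => simp
  · cases i using k.succAboveCases with
    | x =>
      rw [Fin.sum_univ_succAbove _ k] at hx
      simp only [Fin.insertNth_apply_same, map_mul, eval_C, map_sub, map_one, map_sum, eval_X,
        Fin.removeNth]
      rw [← hx, add_sub_cancel_right, inv_mul_cancel_left₀ hk]
    | p j => simp [Fin.removeNth]

lemma MvPolynomial.IsHomogeneous.eval_smul_eq {K σ : Type*} [CommSemiring K] {n : ℕ}
    {p : MvPolynomial σ K} (hp : p.IsHomogeneous n) (c : K) (x : σ → K) :
    eval (c • x) p = c ^ n * eval x p := by
  rw [eval_eq, eval_eq, Finset.mul_sum]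
  refine Finset.sum_congr rfl fun ν hν => ?_
  have hdeg : ∑ i ∈ ν.support, ν i = n := by
    rw [← hp (mem_support_iff.1 hν), Finsupp.weight_apply]
    simp [Finsupp.sum]
  simp only [Pi.smul_apply, smul_eq_mul, mul_pow, Finset.prod_mul_distrib]
  rw [Finset.prod_pow_eq_pow_sum, hdeg]
  ring

/-- A linear form cuts out at most `1 + q + ⋯ + q^(m - 1)` points of `ℙ^m(F_q)`. -/
lemma ncard_projectivization_linearMap_eq_zero_le {K V : Type*} [Field K] [Fintype K]
    [AddCommGroup V] [Module K V] [Module.Finite K V] {m : ℕ} (hV : Module.finrank K V = m + 1)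
    {φ : V →ₗ[K] K} (hφ : φ ≠ 0) :
    Set.ncard {x : Projectivization K V | φ x.rep = 0}
      ≤ ∑ i ∈ Finset.range m, Fintype.card K ^ i := by
  have hker : Module.finrank K (LinearMap.ker φ) = m := by
    have := Module.Dual.finrank_ker_add_one_of_ne_zero (f := φ) hφ
    omega
  have : Finite V := Module.finite_of_finite K
  have hinj := (LinearMap.ker φ).injective_subtype
  have hsub : {x : Projectivization K V | φ x.rep = 0}
      ⊆ Set.range (Projectivization.map (LinearMap.ker φ).subtype hinj) := by
    intro x hx
    refine ⟨Projectivization.mk K ⟨x.rep, hx⟩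
      (fun h => x.rep_nonzero (congrArg Subtype.val h)), ?_⟩
    rw [Projectivization.map_mk]
    exact x.mk_rep
  refine (Set.ncard_le_ncard hsub (Set.toFinite _)).trans ?_
  rw [Set.ncard_range_of_injective (Projectivization.map_injective _ hinj),
    Projectivization.card_of_finrank K _ hker, Nat.card_eq_fintype_card]

lemma sum_range_pow_eq_pp_add (q : ℕ) {m : ℕ} (hm : 1 ≤ m) :
    ∑ i ∈ Finset.range m, q ^ i = pp q ((m : ℤ) - 2) + q ^ (m - 1) := by
  obtain ⟨n, rfl⟩ := Nat.exists_eq_add_of_le' hm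
  rw [Finset.sum_range_succ, Nat.add_sub_cancel]
  congr 1
  unfold pp
  cases n with
  | zero => simp
  | succ n =>
    rw [if_neg (by push_cast; omega)]
    congr 2
    push_cast
    omega

/-- The points of `ℙ(V)` off a hyperplane `φ = 0` at which a homogeneous system vanishes
are no more than the solutions with `φ = 1`. -/
lemma ncard_projectivization_le_card_affine {K : Type*} [Field K] {n r d : ℕ}
    (φ : (Fin n → K) →ₗ[K] K) (F : Fin r → MvPolynomial (Fin n) K)
    (hF : ∀ i, (F i).IsHomogeneous d) (Y : Finset (Fin n → K))
    (hY : ∀ x, φ x = 1 → (∀ i, eval x (F i) = 0) → x ∈ Y) :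
    Set.ncard {x : Projectivization K (Fin n → K) | φ x.rep ≠ 0 ∧ ∀ i, eval x.rep (F i) = 0}
      ≤ Y.card := by
  rw [← Set.ncard_coe_finset]
  refine Set.ncard_le_ncard_of_injOn (fun x => (φ x.rep)⁻¹ • x.rep) ?_ ?_ (Set.toFinite _)
  · rintro x ⟨hx, hxF⟩
    refine hY _ (by simp [hx]) fun i => ?_
    rw [(hF i).eval_smul_eq, hxF i, mul_zero]
  · rintro x ⟨hx, -⟩ y ⟨hy, -⟩ h
    rw [← x.mk_rep, ← y.mk_rep, Projectivization.mk_eq_mk_iff']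
    refine ⟨φ x.rep * (φ y.rep)⁻¹, ?_⟩
    simp only at h
    rw [mul_smul, ← h, smul_inv_smul₀ hx]

/-- If `r ≤ m+1`, `1 < d ≤ q`, and `F₁,…,F_r` are linearly independent homogeneous
polynomials of degree `d` in `F_q[x₀,…,x_m]` having a common linear factor, then
`|V(F₁,…,F_r)| ≤ (d-1)q^(m-1) + p_(m-2) + ⌊q^(m-r)⌋`. -/
theorem common_linear_factor_bound (q d m r : ℕ) {K : Type} [Field K] [Fintype K]
    (hq : Fintype.card K = q) (hm : 1 ≤ m) (hr : 1 ≤ r) (hrm : r ≤ m + 1)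
    (hd : 1 < d) (hdq : d ≤ q)
    (Fs : Fin r → MvPolynomial (Fin (m + 1)) K)
    (hli : LinearIndependent K Fs) (hhom : ∀ i, (Fs i).IsHomogeneous d)
    (hlin : ∃ H : MvPolynomial (Fin (m + 1)) K,
      H.IsHomogeneous 1 ∧ H ≠ 0 ∧ ∀ i, H ∣ Fs i) :
    Set.ncard {x : Projectivization K (Fin (m + 1) → K) | ∀ i, eval x.rep (Fs i) = 0}
      ≤ (d - 1) * q ^ (m - 1) + pp q ((m : ℤ) - 2) + flq q m r := by
  classical
  subst hq
  obtain ⟨H, hH, hH0, hdvd⟩ := hlin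
  choose G hG using hdvd
  obtain ⟨a, rfl⟩ : ∃ a : Fin (m + 1) → K, ∑ i, a i • X i = H := by
    rw [← Submodule.mem_span_range_iff_exists_fun, ← homogeneousSubmodule_one_eq_span_X]
    exact hH
  set H : MvPolynomial (Fin (m + 1)) K := ∑ i, a i • X i
  have ha : a ≠ 0 := by
    rintro rfl
    simp [H] at hH0
  let φ : (Fin (m + 1) → K) →ₗ[K] K := Fintype.linearCombination K a
  have hφ : ∀ x, φ x = ∑ i, a i * x i := fun x => by
    simp [φ, Fintype.linearCombination_apply, mul_comm]
  have hφH : ∀ x, eval x H = φ x := fun x => by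
    rw [hφ, map_sum]
    simp [smul_eval]
  have hφ0 : φ ≠ 0 := by
    intro h
    refine ha (funext fun i => ?_)
    simpa [hφ, Pi.single_apply] using LinearMap.congr_fun h (Pi.single i 1)
  have hdegG : ∀ i, (G i).totalDegree ≤ d - 1 := fun i => by
    have h0 := hli.ne_zero i
    have hG0 : G i ≠ 0 := by
      intro h
      rw [hG, h, mul_zero] at h0
      exact h0 rfl
    have h := (hhom i).totalDegree h0
    rw [hG, totalDegree_mul_of_isDomain hH0 hG0, hH.totalDegree hH0] at h
    omega
  obtain ⟨ρ, s, hs, hρ⟩ := exists_affine_chart ha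
  have hev : ∀ x, φ x = 1 → ∀ p, eval (ρ x) (bind₁ s p) = eval x p := fun x hx p => by
    rw [← coe_aeval_eq_eval, ← coe_aeval_eq_eval, RingHom.coe_coe, RingHom.coe_coe, aeval_bind₁]
    congr 2
    funext i
    rw [aeval_eq_eval]
    exact hρ x (hφ x ▸ hx) i
  have hevF : ∀ x, φ x = 1 → ∀ i, eval (ρ x) (bind₁ s (G i)) = eval x (Fs i) := fun x hx i => by
    rw [hev x hx, hG, map_mul, hφH, hx, one_mul]
  have hlig : LinearIndependent K fun i => bind₁ s (G i) := by
    rw [Fintype.linearIndependent_iff]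
    intro c hc
    refine Fintype.linearIndependent_iff.1 hli c ?_
    have hhomsum : (∑ i, c i • Fs i).IsHomogeneous d :=
      (homogeneousSubmodule _ K d).sum_mem fun i _ =>
        (homogeneousSubmodule _ K d).smul_mem _ (hhom i)
    have hone : ∀ x, φ x = 1 → eval x (∑ i, c i • Fs i) = 0 := fun x hx => by
      have := congrArg (eval (ρ x)) hc
      simpa only [map_sum, smul_eval, hevF x hx, map_zero] using this
    refine hhomsum.eq_zero_of_forall_eval_eq_zero_of_le_card (fun x => ?_) (by simpa using hdq)
    by_cases hx : φ x = 0
    · rw [map_sum]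
      refine Finset.sum_eq_zero fun i _ => ?_
      rw [smul_eval, hG, map_mul, hφH, hx, zero_mul, mul_zero]
    · have := hone ((φ x)⁻¹ • x) (by simp [hx])
      rw [hhomsum.eval_smul_eq] at this
      exact (mul_eq_zero.1 this).resolve_left (pow_ne_zero _ (inv_ne_zero hx))
  set Y : Finset (Fin (m + 1) → K) := {x | φ x = 1 ∧ ∀ i, eval x (Fs i) = 0} with hY
  have hcardY : (Y.image ρ).card = Y.card := by
    refine Finset.card_image_of_injOn fun x hx y hy h => ?_
    simp only [hY, Finset.coe_filter, Finset.mem_univ, true_and, Set.mem_ofPred_eq, hφ] at hx hy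
    funext i
    rw [← hρ x hx.1, ← hρ y hy.1, h]
  have haff := card_common_zeros_le hr hrm (e := d - 1) (by omega) (by omega) _ hlig
    (fun i => (totalDegree_bind₁_le s hs _).trans (hdegG i)) (Y.image ρ) (by
      simp only [Finset.forall_mem_image]
      intro x hx i
      obtain ⟨-, hx, hxF⟩ := Finset.mem_filter.1 hx
      rw [hevF x hx, hxF])
  have hsplit : {x : Projectivization K (Fin (m + 1) → K) | ∀ i, eval x.rep (Fs i) = 0}
      ⊆ {x | φ x.rep = 0} ∪ {x | φ x.rep ≠ 0 ∧ ∀ i, eval x.rep (Fs i) = 0} := fun x hx =>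
    (eq_or_ne (φ x.rep) 0).imp id fun h => ⟨h, hx⟩
  have hle := (Set.ncard_le_ncard hsplit (Set.toFinite _)).trans
    ((Set.ncard_union_le _ _).trans (Nat.add_le_add
      (ncard_projectivization_linearMap_eq_zero_le (m := m) (by simp) hφ0)
      (ncard_projectivization_le_card_affine φ Fs hhom Y
        fun x hx hxF => Finset.mem_filter.2 ⟨Finset.mem_univ x, hx, hxF⟩)))
  rw [sum_range_pow_eq_pp_add _ hm] at hle
  refine hle.trans ?_
  rw [hcardY] at haff
  obtain ⟨n, rfl⟩ := Nat.exists_eq_add_of_le' hm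
  obtain ⟨e, rfl⟩ := Nat.exists_eq_add_of_le' hd
  have haff' : Y.card ≤ e * Fintype.card K ^ n + flq (Fintype.card K) (n + 1) r := by
    refine Nat.le_of_mul_le_mul_left (haff.trans_eq ?_) (Fintype.card_pos (α := K))
    simp only [Nat.succ_eq_add_one, pow_succ]
    rw [show e + (1 + 1) - 1 - 1 = e by omega]
    ring
  rw [Nat.add_sub_cancel, show e + Nat.succ 1 - 1 = e + 1 by omega, add_mul, one_mul]
  omega
end

section
/- Assume $r > 1$ and $1 < d < q - 1$. If $F_1, \dots, F_r$ are linearly independent homogeneous polynomials of degree $d$ in $\mathbb{F}_q[x_0,\dots,x_m]$ such that some pair $F_i, F_j$ ($i \ne j$) has no nonconstant common factor, then $|V(F_1, \dots, F_r)| < (d-1)q^{m-1} + p_{m-2}$. -/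
open MvPolynomial

/-- The expansion of a multivariate polynomial along the generic line through `a`. -/
noncomputable def lineExpansion {σ K : Type*} [Field K] (a : σ → K) :
    MvPolynomial σ K →ₐ[K] Polynomial (MvPolynomial σ K) :=
  aeval fun i => Polynomial.C (C (a i)) + Polynomial.X * Polynomial.C (X i)

theorem coeff_zero_lineExpansion {σ K : Type*} [Field K] (a : σ → K) (P : MvPolynomial σ K) :
    (lineExpansion a P).coeff 0 = C (eval a P) := by
  induction P using MvPolynomial.induction_on with
  | C c =>
    rw [lineExpansion, aeval_C, IsScalarTower.algebraMap_apply K (MvPolynomial σ K)]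
    simp [algebraMap_eq]
  | add p q hp hq => simp [hp, hq]
  | mul_X p i hp =>
    rw [map_mul, Polynomial.mul_coeff_zero, hp]
    simp [lineExpansion]

theorem X_pow_dvd_lineExpansion_zero {σ K : Type*} [Field K] {P : MvPolynomial σ K} {D : ℕ}
    (hP : P.IsHomogeneous D) : Polynomial.X ^ D ∣ lineExpansion 0 P := by
  rw [lineExpansion, aeval_def, eval₂_eq]
  refine Finset.dvd_sum fun e he => Dvd.dvd.mul_left ?_ _
  have hdeg : ∑ i ∈ e.support, e i = D := by
    simpa [Finsupp.weight_apply, Finsupp.sum] using hP (mem_support_iff.mp he)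
  simp only [Pi.zero_apply, map_zero, zero_add, mul_pow, Finset.prod_mul_distrib,
    Finset.prod_pow_eq_pow_sum, hdeg]
  exact dvd_mul_right _ _

/-- The restriction of a polynomial to the hyperplane on which the first coordinate is `b`. -/
noncomputable def restrictFirst {K : Type*} [Field K] (n : ℕ) (b : K) :
    MvPolynomial (Fin (n + 1)) K →ₐ[K] MvPolynomial (Fin n) K :=
  aeval (Fin.cons (C b) X : Fin (n + 1) → MvPolynomial (Fin n) K)

theorem restrictFirst_eq_eval {K : Type*} [Field K] {n : ℕ} (b : K)
    (P : MvPolynomial (Fin (n + 1)) K) :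
    restrictFirst n b P = (finSuccEquiv K n P).eval (C b) := by
  have : restrictFirst n b = ((Polynomial.aeval (C b)).restrictScalars K).comp
      (finSuccEquiv K n).toAlgHom := by
    ext i : 1
    refine Fin.cases ?_ (fun j => ?_) i <;>
      simp [restrictFirst, finSuccEquiv_X_zero, finSuccEquiv_X_succ]
  simp [this]

theorem X_sub_C_dvd_of_restrictFirst_eq_zero {K : Type*} [Field K] {n : ℕ} {b : K}
    {P : MvPolynomial (Fin (n + 1)) K} (h : restrictFirst n b P = 0) : X 0 - C b ∣ P := by
  rw [restrictFirst_eq_eval, ← Polynomial.IsRoot.def, ← Polynomial.dvd_iff_isRoot] at h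
  have hX : Polynomial.X - Polynomial.C (C b) = finSuccEquiv K n (X 0 - C b) := by
    rw [map_sub, finSuccEquiv_X_zero, finSuccEquiv_apply, eval₂Hom_C]
    rfl
  rw [hX] at h
  exact (map_dvd_iff (finSuccEquiv K n)).mp h

theorem totalDegree_restrictFirst_le {K : Type*} [Field K] {n : ℕ} (b : K)
    (P : MvPolynomial (Fin (n + 1)) K) : (restrictFirst n b P).totalDegree ≤ P.totalDegree := by
  rw [restrictFirst_eq_eval, Polynomial.eval_eq_sum, Polynomial.sum_def]
  refine totalDegree_finsetSum_le fun i hi => ?_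
  rw [← C_pow, mul_comm]
  refine (totalDegree_mul _ _).trans ?_
  have := totalDegree_coeff_finSuccEquiv_add_le P i (Polynomial.mem_support_iff.mp hi)
  simp only [totalDegree_C]
  lia

theorem lineExpansion_restrictFirst {K : Type*} [Field K] {n : ℕ} (b : K) (a : Fin n → K)
    (P : MvPolynomial (Fin (n + 1)) K) :
    lineExpansion a (restrictFirst n b P) =
      (lineExpansion (Fin.cons b a : Fin (n + 1) → K) P).map
        (restrictFirst n (0 : K)).toRingHom := by
  have : (lineExpansion a).comp (restrictFirst n b) =
      (Polynomial.mapAlgHom (restrictFirst n (0 : K))).comp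
        (lineExpansion (Fin.cons b a : Fin (n + 1) → K)) := by
    ext i : 1
    have h (c : K) : algebraMap K (Polynomial (MvPolynomial (Fin n) K)) c =
      Polynomial.C (C c) := rfl
    refine Fin.cases ?_ (fun j => ?_) i <;>
      simp [restrictFirst, lineExpansion, algHom_C, h, algebraMap_eq]
  exact DFunLike.congr_fun this P

/-- The Schwartz–Zippel bound counted with multiplicity. -/
theorem card_mul_sum_multiplicity_le {K : Type*} [Field K] [Fintype K] (n : ℕ) :
    ∀ (D : ℕ) (P : MvPolynomial (Fin n) K), P ≠ 0 → P.totalDegree ≤ D →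
      ∀ k : (Fin n → K) → ℕ, (∀ a, Polynomial.X ^ k a ∣ lineExpansion a P) →
        Fintype.card K * ∑ a, k a ≤ D * Fintype.card K ^ n := by
  induction n with
  | zero =>
    intro D P hP _ k hk
    obtain ⟨c, rfl⟩ := C_surjective (Fin 0) P
    have hk0 (a) : k a = 0 := by
      by_contra h
      have := (dvd_pow_self Polynomial.X h).trans (hk a)
      rw [Polynomial.X_dvd_iff, coeff_zero_lineExpansion] at this
      simp_all
    simp [hk0]
  | succ n ihn =>
    intro D
    induction D with
    | zero =>
      intro P hP hD k hk
      rw [Nat.le_zero, totalDegree_eq_zero_iff_eq_C] at hD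
      have hk0 (a) : k a = 0 := by
        by_contra h
        have := (dvd_pow_self Polynomial.X h).trans (hk a)
        rw [Polynomial.X_dvd_iff, coeff_zero_lineExpansion, hD] at this
        apply hP
        rw [hD]
        simpa using this
      simp [hk0]
    | succ D ihD =>
    intro P hP hD k hk
    by_cases hb : ∃ b, restrictFirst n b P = 0
    · obtain ⟨b, hb⟩ := hb
      obtain ⟨Q, rfl⟩ := X_sub_C_dvd_of_restrictFirst_eq_zero hb
      have hQ : Q ≠ 0 := right_ne_zero_of_mul hP
      have hX : (X 0 - C b : MvPolynomial (Fin (n + 1)) K) ≠ 0 := left_ne_zero_of_mul hP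
      have hdeg : (X 0 - C b : MvPolynomial (Fin (n + 1)) K).totalDegree = 1 := by
        rw [sub_eq_add_neg, ← C_neg, totalDegree_add_eq_left_of_totalDegree_lt (by simp),
          totalDegree_X]
      rw [totalDegree_mul_of_isDomain hX hQ, hdeg] at hD
      classical
      have key := ihD Q hQ (by lia) (fun a => k a - if a 0 = b then 1 else 0) fun a => by
        have h := hk a
        have hfac : lineExpansion a (X 0 - C b) =
            Polynomial.C (C (a 0 - b)) + Polynomial.X * Polynomial.C (X 0) := by
          have hC : algebraMap K (Polynomial (MvPolynomial (Fin (n + 1)) K)) b =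
            Polynomial.C (C b) := rfl
          simp [lineExpansion, hC]
          ring
        rw [map_mul, hfac] at h
        split_ifs with hab
        · rcases Nat.eq_zero_or_pos (k a) with h0 | h0
          · simp [h0]
          obtain ⟨l, hl⟩ := Nat.exists_eq_add_of_lt h0
          rw [hl, zero_add, pow_succ', hab, sub_self, map_zero, map_zero, zero_add, mul_assoc,
            mul_dvd_mul_iff_left Polynomial.X_ne_zero] at h
          rw [hl]
          simpa using Polynomial.prime_X.pow_dvd_of_dvd_mul_left _
            (by simp [Polynomial.X_dvd_iff]) h
        · refine Polynomial.prime_X.pow_dvd_of_dvd_mul_left _ ?_ h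
          simpa [Polynomial.X_dvd_iff, sub_eq_zero] using hab
      have hcount : ∑ a : Fin (n + 1) → K, (if a 0 = b then 1 else 0) = Fintype.card K ^ n := by
        rw [← (Fin.consEquiv fun _ => K).sum_comp, Fintype.sum_prod_type]
        simp [Fin.consEquiv]
      have hsum : ∑ a, k a ≤ ∑ a, (k a - if a 0 = b then 1 else 0) + Fintype.card K ^ n := by
        rw [← hcount, ← Finset.sum_add_distrib]
        exact Finset.sum_le_sum fun a _ => by lia
      calc Fintype.card K * ∑ a, k a
          ≤ Fintype.card K * (∑ a, (k a - if a 0 = b then 1 else 0) + Fintype.card K ^ n) := by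
            gcongr
        _ ≤ D * Fintype.card K ^ (n + 1) + Fintype.card K * Fintype.card K ^ n := by
            rw [mul_add]; gcongr
        _ = (D + 1) * Fintype.card K ^ (n + 1) := by ring
    · push Not at hb
      rw [← (Fin.consEquiv fun _ => K).sum_comp, Fintype.sum_prod_type, Finset.mul_sum]
      calc _ ≤ ∑ b : K, (D + 1) * Fintype.card K ^ n := by
            refine Finset.sum_le_sum fun b _ => ihn _ _ (hb b)
              ((totalDegree_restrictFirst_le b P).trans hD) _ fun a => ?_
            rw [lineExpansion_restrictFirst]
            simpa [Fin.consEquiv] using Polynomial.map_dvd (restrictFirst n (0 : K)).toRingHom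
              (hk (Fin.cons b a))
        _ = _ := by simp; ring

/-- If `k` independent constant combinations of the rows of a matrix are divisible by `p`, then
`p ^ k` divides its determinant. -/
theorem pow_dvd_det_of_linearIndependent {K A ι n : Type*} [Field K] [CommRing A] [Algebra K A]
    [Fintype ι] [Fintype n] [DecidableEq n] (S : Matrix n n A) (p : A) (w : ι → n → K)
    (hw : LinearIndependent K w) (h : ∀ c j, p ∣ ∑ i, algebraMap K A (w c i) * S i j) :
    p ^ Fintype.card ι ∣ S.det := by
  classical
  let b := Module.Basis.sumExtend hw
  have hb (c : ι) : b (Sum.inl c) = w c := by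
    simp only [b, Module.Basis.sumExtend, Module.Basis.reindex_apply, Module.Basis.extend_apply_self]
    rfl
  let e := (Pi.basisFun K n).indexEquiv b
  let P : Matrix n n K := .of fun i => b (e i)
  have hP : IsUnit P.det := by
    rw [← Matrix.isUnit_iff_isUnit_det, ← Matrix.linearIndependent_rows_iff_isUnit]
    exact b.linearIndependent.comp _ e.injective
  have hPA : IsUnit (P.map (algebraMap K A)).det := by
    rw [← RingHom.mapMatrix_apply, ← RingHom.map_det]
    exact hP.map _
  rw [← hPA.dvd_mul_left, ← Matrix.det_mul]
  set T := P.map (algebraMap K A) * S with hT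
  let v : n → A := fun i => Sum.elim (fun _ => p) (fun _ => 1) (e i)
  have hv (i j) : v i ∣ T i j := by
    obtain ⟨s, rfl⟩ := e.symm.surjective i
    cases s with
    | inl c => simpa [v, hT, Matrix.mul_apply, P, hb] using h c j
    | inr c => simp [v]
  choose U hU using hv
  have hTU : T = .of fun i j => v i * (Matrix.of U) i j := by ext i j; simp [hU]
  rw [hTU, Matrix.det_mul_column]
  refine Dvd.dvd.mul_right ?_ _
  have : Fintype (Module.Basis.sumExtendIndex hw) :=
    @Fintype.sumRight ι _ (Fintype.ofEquiv _ e)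
  rw [e.prod_comp (Sum.elim (fun _ => p) (fun _ => 1)), Fintype.prod_sum_type]
  simp

theorem sum_pow_mul_sylvester {A : Type*} [CommRing A] {f g : Polynomial A} {m n : ℕ}
    (hf : f.natDegree ≤ m) (hg : g.natDegree ≤ n) (c : A) (hfc : f.eval c = 0)
    (hgc : g.eval c = 0) (j : Fin (m + n)) :
    ∑ i : Fin (m + n), c ^ (i : ℕ) * Polynomial.sylvester f g m n i j = 0 := by
  have key (h : Polynomial A) (l j : ℕ) (hh : h.natDegree ≤ l) (hj : l + j < m + n)
      (hc : h.eval c = 0) : ∑ i : Fin (m + n), c ^ (i : ℕ) *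
        (if (i : ℕ) ∈ Set.Icc j (j + l) then h.coeff (i - j) else 0) = 0 := by
    have h0 : (h * Polynomial.X ^ j).eval c = 0 := by simp [hc]
    have hlt : (h * Polynomial.X ^ j).natDegree < m + n :=
      (Polynomial.natDegree_mul_le_of_le hh (Polynomial.natDegree_X_pow_le j)).trans_lt hj
    rw [Polynomial.eval_eq_sum_range' hlt, ← Fin.sum_univ_eq_sum_range] at h0
    refine (Finset.sum_congr rfl fun i _ => ?_).trans h0
    rw [mul_comm, Polynomial.coeff_mul_X_pow']
    by_cases h₁ : j ≤ (i : ℕ)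
    · by_cases h₂ : (i : ℕ) ≤ j + l
      · rw [if_pos ⟨h₁, h₂⟩, if_pos h₁]
      · rw [if_neg (by simp [h₂]), if_pos h₁,
          Polynomial.coeff_eq_zero_of_natDegree_lt (by lia)]
    · rw [if_neg (by simp [h₁]), if_neg h₁]
  refine Fin.addCases (fun j => ?_) (fun j => ?_) j
  · simpa [Polynomial.sylvester] using key g n j hg (by lia) hgc
  · simpa [Polynomial.sylvester] using key f m j hf (by lia) hfc

theorem linearIndependent_pow_of_injective {K : Type*} [Field K] {k N : ℕ} (hk : k ≤ N) {c : Fin k → K}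
    (hc : Function.Injective c) :
    LinearIndependent K fun (l : Fin k) (i : Fin N) => c l ^ (i : ℕ) := by
  have h := Matrix.linearIndependent_rows_iff_isUnit.mpr
    ((Matrix.isUnit_iff_isUnit_det _).mpr (Matrix.det_vandermonde_ne_zero_iff.mpr hc).isUnit)
  exact LinearIndependent.of_comp (LinearMap.funLeft K K (Fin.castLE hk)) h

/-- Homogeneity of the determinant of a matrix whose rows and columns are graded. -/
theorem isHomogeneous_det {σ R n : Type*} [CommRing R] [Fintype n] [DecidableEq n]
    {S : Matrix n n (MvPolynomial σ R)} {u v : n → ℕ} {D : ℕ}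
    (hS : ∀ i j, S i j = 0 ∨ ∃ e, e + u i = v j ∧ (S i j).IsHomogeneous e)
    (hD : D + ∑ i, u i = ∑ j, v j) : S.det.IsHomogeneous D := by
  rw [Matrix.det_apply]
  refine IsHomogeneous.sum _ _ _ fun τ _ => ?_
  have hprod : (∏ i, S (τ i) i).IsHomogeneous D := by
    by_cases h0 : ∃ i, S (τ i) i = 0
    · obtain ⟨i, hi⟩ := h0
      have := Finset.prod_eq_zero (f := fun i => S (τ i) i) (Finset.mem_univ i) hi
      rw [this]
      exact isHomogeneous_zero _ _ _
    · push Not at h0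
      choose e he hhom using fun i => (hS (τ i) i).resolve_left (h0 i)
      have : ∑ i, e i = D := by
        have := Finset.sum_congr rfl fun i (_ : i ∈ Finset.univ) => he i
        rw [Finset.sum_add_distrib, Equiv.sum_comp τ u] at this
        lia
      rw [← this]
      exact IsHomogeneous.prod _ _ _ fun i _ => hhom i
  rcases Int.units_eq_one_or (Equiv.Perm.sign τ) with h | h <;> rw [h]
  · simpa using hprod
  · simpa using hprod.neg

theorem isHomogeneous_resultant {σ R : Type*} [CommRing R] {d e : ℕ}
    {f g : Polynomial (MvPolynomial σ R)} (hf : ∀ i ≤ d, (f.coeff i).IsHomogeneous (d - i))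
    (hg : ∀ i ≤ e, (g.coeff i).IsHomogeneous (e - i)) :
    (Polynomial.resultant f g d e).IsHomogeneous (d * e) := by
  refine isHomogeneous_det (n := Fin (d + e)) (u := fun i => (i : ℕ))
    (v := fun j => Fin.addCases (motive := fun _ => ℕ)
    (fun j : Fin d => e + (j : ℕ)) (fun j : Fin e => d + (j : ℕ)) j) (fun i j => ?_) ?_
  · refine Fin.addCases (fun j => ?_) (fun j => ?_) j <;>
      simp only [Polynomial.sylvester, Matrix.of_apply, Fin.addCases_left, Fin.addCases_right] <;>
      split_ifs with h
    · exact .inr ⟨_, by grind, hg _ (by grind)⟩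
    · exact .inl rfl
    · exact .inr ⟨_, by grind, hf _ (by grind)⟩
    · exact .inl rfl
  · simp only [Fin.sum_univ_add, Fin.addCases_left, Fin.addCases_right, Fin.val_castAdd,
      Fin.val_natAdd, Finset.sum_add_distrib]
    simp
    ring

theorem resultant_ne_zero_of_isRelPrime {A : Type*} [CommRing A] [IsDomain A]
    [DecompositionMonoid (Polynomial A)] {f g : Polynomial A} {m n : ℕ}
    (hf : f.natDegree = m) (hf0 : f ≠ 0) (hg : g.natDegree ≤ n) (h : IsRelPrime f g) :
    Polynomial.resultant f g m n ≠ 0 := by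
  intro hres
  obtain ⟨v, hv0, hv⟩ := Matrix.exists_mulVec_eq_zero_iff.mpr hres
  rw [← Polynomial.toMatrix_sylvesterMap' f g hf.le hg] at hv
  set b := ((Polynomial.degreeLT.basis A m).prod (Polynomial.degreeLT.basis A n)).reindex
    finSumFinEquiv
  set x := b.equivFun.symm v
  have hx : v = b.repr x := by rw [← Module.Basis.equivFun_apply, LinearEquiv.apply_symm_apply]
  rw [hx, LinearMap.toMatrix_mulVec_repr] at hv
  have hzero : Polynomial.sylvesterMap f g hf.le hg x = 0 := by
    simpa using hv
  have hrel : f * x.2 + g * x.1 = 0 := by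
    simpa using congrArg Subtype.val hzero
  have hdvd : f ∣ x.1 := h.dvd_of_dvd_mul_left
    ((dvd_add_right (dvd_mul_right f _)).mp (hrel ▸ dvd_zero f))
  have hx1 : (x.1 : Polynomial A) = 0 := by
    refine Polynomial.eq_zero_of_dvd_of_degree_lt hdvd ?_
    rw [Polynomial.degree_eq_natDegree hf0, hf]
    exact Polynomial.mem_degreeLT.mp x.1.2
  have hx2 : (x.2 : Polynomial A) = 0 := by simpa [hx1, hf0] using hrel
  apply hv0
  rw [hx, show x = 0 from Prod.ext (Subtype.ext hx1) (Subtype.ext hx2)]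
  simp

theorem MvPolynomial.IsHomogeneous.eval_smul {σ R : Type*} [CommRing R] {P : MvPolynomial σ R}
    {d : ℕ} (hP : P.IsHomogeneous d) (c : R) (x : σ → R) :
    eval (c • x) P = c ^ d * eval x P := by
  rw [eval_eq, eval_eq, Finset.mul_sum]
  refine Finset.sum_congr rfl fun e he => ?_
  have hdeg : ∑ i ∈ e.support, e i = d := by
    simpa [Finsupp.weight_apply, Finsupp.sum] using hP (mem_support_iff.mp he)
  simp only [Pi.smul_apply, smul_eq_mul, mul_pow, Finset.prod_mul_distrib,
    Finset.prod_pow_eq_pow_sum, hdeg]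
  ring

theorem natDegree_finSuccEquiv_le {K : Type*} [Field K] {n d : ℕ}
    {F : MvPolynomial (Fin (n + 1)) K} (hF : F.IsHomogeneous d) :
    (finSuccEquiv K n F).natDegree ≤ d := by
  rw [natDegree_finSuccEquiv]
  exact (degreeOf_le_totalDegree F 0).trans hF.totalDegree_le

theorem map_eval_zero_finSuccEquiv {K : Type*} [Field K] {n d : ℕ}
    {F : MvPolynomial (Fin (n + 1)) K} (hF : F.IsHomogeneous d) :
    (finSuccEquiv K n F).map (eval 0) =
      Polynomial.C (eval (Fin.cons 1 0 : Fin (n + 1) → K) F) * Polynomial.X ^ d := by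
  obtain ⟨c, hc⟩ : ∃ c, (finSuccEquiv K n F).map (eval 0) =
      Polynomial.C c * Polynomial.X ^ d := by
    refine ⟨eval 0 ((finSuccEquiv K n F).coeff d), ?_⟩
    ext i
    rw [Polynomial.coeff_map, Polynomial.coeff_C_mul_X_pow]
    split_ifs with h
    · rw [h]
    rcases lt_or_gt_of_ne h with h | h
    · have := (hF.finSuccEquiv_coeff_isHomogeneous i (d - i) (by lia)).coeff_eq_zero (d := 0)
        (by simp; lia)
      rw [← constantCoeff_eq] at this
      simpa using this
    · rw [Polynomial.coeff_eq_zero_of_natDegree_lt ((natDegree_finSuccEquiv_le hF).trans_lt h),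
        map_zero]
  rw [eval_eq_eval_mv_eval', hc]
  simp

theorem X_pow_card_dvd_lineExpansion_resultant {σ K : Type*} [Field K]
    {f g : Polynomial (MvPolynomial σ K)} {m n : ℕ} (hf : f.natDegree ≤ m) (hg : g.natDegree ≤ n)
    (a : σ → K) (hfa : f.map (eval a) ≠ 0) (T : Finset K)
    (hT : ∀ c ∈ T, (f.map (eval a)).eval c = 0 ∧ (g.map (eval a)).eval c = 0) :
    Polynomial.X ^ T.card ∣ lineExpansion a (Polynomial.resultant f g m n) := by
  have hfam : (f.map (eval a)).natDegree ≤ m := Polynomial.natDegree_map_le.trans hf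
  have hgan : (g.map (eval a)).natDegree ≤ n := Polynomial.natDegree_map_le.trans hg
  have hcard : T.card ≤ m + n := by
    have : T.card ≤ (f.map (eval a)).natDegree :=
      Polynomial.card_le_degree_of_subset_roots fun c hc =>
        (Polynomial.mem_roots hfa).mpr (hT c (by simpa using hc)).1
    lia
  have hinj : Function.Injective fun l => (T.equivFin.symm l : K) :=
    Subtype.val_injective.comp T.equivFin.symm.injective
  have hdet : lineExpansion a (Polynomial.resultant f g m n) =
      ((lineExpansion a).toRingHom.mapMatrix (Polynomial.sylvester f g m n)).det := by
    rw [← RingHom.map_det]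
    rfl
  rw [hdet]
  have := pow_dvd_det_of_linearIndependent
    ((lineExpansion a).toRingHom.mapMatrix (Polynomial.sylvester f g m n)) Polynomial.X _
    (linearIndependent_pow_of_injective hcard hinj) fun l j => by
      obtain ⟨h1, h2⟩ := hT _ (T.equivFin.symm l).2
      have key := sum_pow_mul_sylvester hfam hgan _ h1 h2 j
      rw [Polynomial.sylvester_map_map] at key
      have halg (c : K) : algebraMap K (Polynomial (MvPolynomial σ K)) c =
        Polynomial.C (C c) := rfl
      rw [Polynomial.X_dvd_iff, Polynomial.finsetSum_coeff, ← C_0, ← key, map_sum]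
      refine Finset.sum_congr rfl fun i _ => ?_
      rw [halg, Polynomial.coeff_C_mul, map_mul]
      simpa using Or.inl (coeff_zero_lineExpansion a _)
  simpa using this

theorem card_commonZeros_of_eval_ne_zero {K : Type*} [Field K] [Fintype K] [DecidableEq K]
    {n d : ℕ} (hd : d ≠ 0) {F G : MvPolynomial (Fin (n + 1)) K} (hF : F.IsHomogeneous d)
    (hG : G.IsHomogeneous d) (hrel : IsRelPrime F G)
    (hF1 : eval (Fin.cons 1 0 : Fin (n + 1) → K) F ≠ 0) :
    Fintype.card K * (Fintype.card {x : Fin (n + 1) → K // eval x F = 0 ∧ eval x G = 0} + d ^ 2) ≤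
      d ^ 2 * Fintype.card K ^ n + Fintype.card K := by
  set f := finSuccEquiv K n F with hf
  set g := finSuccEquiv K n G with hg
  have hfd := natDegree_finSuccEquiv_le hF
  have hgd := natDegree_finSuccEquiv_le hG
  have hrel' : IsRelPrime f g := by
    refine IsRelPrime.of_map (finSuccEquiv K n).symm ?_
    simpa [hf, hg] using hrel
  have hf0 := map_eval_zero_finSuccEquiv hF
  obtain ⟨c, hc⟩ : ∃ c, f.coeff d = C c :=
    ⟨_, totalDegree_eq_zero_iff_eq_C.mp ((totalDegree_zero_iff_isHomogeneous _).mpr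
      (hF.finSuccEquiv_coeff_isHomogeneous d 0 (by simp)))⟩
  have hc0 : c ≠ 0 := by
    have := congrArg (Polynomial.coeff · d) hf0
    simp only [Polynomial.coeff_map, ← hf, hc, eval_C, Polynomial.coeff_C_mul_X_pow] at this
    simpa [this] using hF1
  have hfa (a : Fin n → K) : f.map (eval a) ≠ 0 := fun h => by
    have := congrArg (Polynomial.coeff · d) h
    simp [hc, hc0] at this
  have hfne : f ≠ 0 := fun h => hfa 0 (by simp [h])
  have hfdeg : f.natDegree = d :=
    le_antisymm hfd (Polynomial.le_natDegree_of_ne_zero (by simpa [hc] using hc0))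
  set R := Polynomial.resultant f g d d
  have hR0 : R ≠ 0 := resultant_ne_zero_of_isRelPrime hfdeg hfne hgd hrel'
  have hRhom : R.IsHomogeneous (d * d) := isHomogeneous_resultant
    (fun i hi => hF.finSuccEquiv_coeff_isHomogeneous i (d - i) (by lia))
    (fun i hi => hG.finSuccEquiv_coeff_isHomogeneous i (d - i) (by lia))
  let T (a : Fin n → K) : Finset K := Finset.univ.filter fun c =>
    (f.map (eval a)).eval c = 0 ∧ (g.map (eval a)).eval c = 0
  have key := card_mul_sum_multiplicity_le n (d * d) R hR0 hRhom.totalDegree_le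
    (fun a => if a = 0 then d * d else (T a).card) fun a => by
      split_ifs with h
      · rw [h]
        exact X_pow_dvd_lineExpansion_zero hRhom
      · exact X_pow_card_dvd_lineExpansion_resultant hfd hgd a (hfa a) (T a)
          fun c hc => (Finset.mem_filter.mp hc).2
  have hT0 : (T 0).card ≤ 1 := by
    refine Finset.card_le_one_iff_subset_singleton.mpr ⟨0, fun c hc => ?_⟩
    have := (Finset.mem_filter.mp hc).2.1
    rw [hf0] at this
    simpa [hF1, hd] using this
  have hcount : Fintype.card {x : Fin (n + 1) → K // eval x F = 0 ∧ eval x G = 0} =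
      ∑ a, (T a).card := by
    rw [Fintype.card_subtype, Finset.card_filter, ← (Fin.consEquiv fun _ => K).sum_comp,
      Fintype.sum_prod_type_right]
    refine Finset.sum_congr rfl fun a _ => ?_
    rw [Finset.card_filter]
    simp [Fin.consEquiv, eval_eq_eval_mv_eval', ← hf, ← hg]
  have hsum : ∑ a, (T a).card + d ^ 2 ≤
      ∑ a : Fin n → K, (if a = 0 then d * d else (T a).card) + 1 := by
    rw [← Finset.add_sum_erase _ _ (Finset.mem_univ (0 : Fin n → K)),
      ← Finset.add_sum_erase _ (fun a => if a = 0 then d * d else (T a).card)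
        (Finset.mem_univ (0 : Fin n → K)),
      Finset.sum_congr rfl fun a ha => if_neg (Finset.ne_of_mem_erase ha), if_pos rfl]
    lia
  rw [hcount]
  calc _ ≤ _ := Nat.mul_le_mul_left _ hsum
    _ ≤ _ := by rw [mul_add, mul_one, sq]; gcongr

/-- The substitution `xᵢ ↦ xᵢ + wᵢ x₀`, invertible when `w₀ = 0`. -/
noncomputable def shear {K : Type*} [Field K] {n : ℕ} (w : Fin (n + 1) → K) (hw : w 0 = 0) :
    MvPolynomial (Fin (n + 1)) K ≃ₐ[K] MvPolynomial (Fin (n + 1)) K :=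
  AlgEquiv.ofAlgHom (aeval fun i => X i + C (w i) * X 0) (aeval fun i => X i - C (w i) * X 0)
    (by ext i : 1; simp [hw, algHom_C, algebraMap_eq])
    (by ext i : 1; simp [hw, algHom_C, algebraMap_eq])

theorem eval_shear {K : Type*} [Field K] {n : ℕ} (w : Fin (n + 1) → K) (hw : w 0 = 0)
    (x : Fin (n + 1) → K) (P : MvPolynomial (Fin (n + 1)) K) :
    eval x (shear w hw P) = eval (fun i => x i + w i * x 0) P := by
  have : (aeval x).comp (shear w hw).toAlgHom = aeval fun i => x i + w i * x 0 := by
    ext i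
    simp [shear]
  have h := DFunLike.congr_fun this P
  rwa [← coe_aeval_eq_eval, ← coe_aeval_eq_eval]

theorem MvPolynomial.IsHomogeneous.shear {K : Type*} [Field K] {n d : ℕ}
    {P : MvPolynomial (Fin (n + 1)) K} (hP : P.IsHomogeneous d) (w : Fin (n + 1) → K)
    (hw : w 0 = 0) : (shear w hw P).IsHomogeneous d := by
  have := hP.aeval (fun i => X i + C (w i) * X 0) (n := 1) fun i =>
    (isHomogeneous_X K i).add (isHomogeneous_C_mul_X (w i) 0)
  rwa [one_mul] at this

/-- A Bézout-type bound for the affine cone cut out by two coprime forms of degree `d`. -/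
theorem card_commonZeros_le {K : Type*} [Field K] [Fintype K] [DecidableEq K]
    {n d : ℕ} (hd : d ≠ 0) (hdq : d + 1 ≤ Fintype.card K) {F G : MvPolynomial (Fin (n + 1)) K}
    (hF0 : F ≠ 0) (hF : F.IsHomogeneous d) (hG : G.IsHomogeneous d) (hrel : IsRelPrime F G) :
    Fintype.card K * (Fintype.card {x : Fin (n + 1) → K // eval x F = 0 ∧ eval x G = 0} + d ^ 2) ≤
      d ^ 2 * Fintype.card K ^ n + Fintype.card K := by
  obtain ⟨v, hv⟩ : ∃ v, eval v (F * X 0) ≠ 0 := by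
    by_contra! h
    exact mul_ne_zero hF0 (X_ne_zero 0) ((hF.mul (isHomogeneous_X K 0))
      |>.eq_zero_of_forall_eval_eq_zero_of_le_card h (by simpa using mod_cast hdq))
  rw [map_mul, eval_X, mul_ne_zero_iff] at hv
  let w : Fin (n + 1) → K := Fin.cons 0 fun i => (v 0)⁻¹ * v i.succ
  have hw : w 0 = 0 := rfl
  have h1 : eval (Fin.cons 1 0 : Fin (n + 1) → K) (shear w hw F) ≠ 0 := by
    have hvw : (fun i => (Fin.cons 1 0 : Fin (n + 1) → K) i +
        w i * (Fin.cons 1 0 : Fin (n + 1) → K) 0) = (v 0)⁻¹ • v := by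
      ext i
      refine Fin.cases ?_ (fun j => ?_) i <;> simp [w, hv.2]
    rw [eval_shear, hvw, hF.eval_smul]
    exact mul_ne_zero (pow_ne_zero _ (inv_ne_zero hv.2)) hv.1
  have hrel' : IsRelPrime (shear w hw F) (shear w hw G) :=
    IsRelPrime.of_map (shear w hw).symm (by simpa using hrel)
  convert card_commonZeros_of_eval_ne_zero hd (hF.shear w hw) (hG.shear w hw) hrel' h1 using 3
  let e : (Fin (n + 1) → K) ≃ (Fin (n + 1) → K) :=
    { toFun := fun x i => x i + w i * x 0
      invFun := fun x i => x i - w i * x 0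
      left_inv := fun x => by ext i; simp [hw]
      right_inv := fun x => by ext i; simp [hw] }
  exact (Fintype.card_congr (e.subtypeEquiv fun x => by simp [eval_shear, e])).symm

theorem ncard_mul_add_one_le {K : Type*} [Field K] [Fintype K] [DecidableEq K] {n d : ℕ}
    (hd : d ≠ 0) {F G : MvPolynomial (Fin n) K} (hF : F.IsHomogeneous d) (hG : G.IsHomogeneous d)
    (Z : Set (Projectivization K (Fin n → K)))
    (hZ : ∀ x ∈ Z, eval x.rep F = 0 ∧ eval x.rep G = 0) :
    Z.ncard * (Fintype.card K - 1) + 1 ≤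
      Fintype.card {x : Fin n → K // eval x F = 0 ∧ eval x G = 0} := by
  let φ : Option (Z × Kˣ) → {x : Fin n → K // eval x F = 0 ∧ eval x G = 0} := fun y =>
    y.elim ⟨0, by
      have hzero {P : MvPolynomial (Fin n) K} (hP : P.IsHomogeneous d) : eval 0 P = 0 := by
        simpa [hd] using hP.eval_smul 0 0
      exact ⟨hzero hF, hzero hG⟩⟩
      fun y => ⟨(y.2 : K) • (y.1 : Projectivization K (Fin n → K)).rep, by
        rw [hF.eval_smul, hG.eval_smul, (hZ _ y.1.2).1, (hZ _ y.1.2).2]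
        simp⟩
  have hφ : Function.Injective φ := by
    rintro (_ | ⟨x, u⟩) (_ | ⟨y, v⟩) h
    · rfl
    · exact absurd (congrArg Subtype.val h).symm
        (smul_ne_zero v.ne_zero (Projectivization.rep_nonzero _))
    · exact absurd (congrArg Subtype.val h)
        (smul_ne_zero u.ne_zero (Projectivization.rep_nonzero _))
    · have h' : (u : K) • x.1.rep = (v : K) • y.1.rep := congrArg Subtype.val h
      have hxy : x = y := by
        ext1
        rw [← x.1.mk_rep, ← y.1.mk_rep, Projectivization.mk_eq_mk_iff']
        exact ⟨(u : K)⁻¹ * v, by rw [mul_smul, ← h', inv_smul_smul₀ u.ne_zero]⟩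
      subst hxy
      rw [Units.ext (smul_left_injective K x.1.rep_nonzero h')]
  have := Nat.card_le_card_of_injective φ hφ
  rwa [Finite.card_option, Nat.card_prod, Nat.card_coe_set_eq, Nat.card_eq_fintype_card,
    Nat.card_eq_fintype_card, Fintype.card_units] at this

/-- Low correlation, case 1: if `r > 1`, `1 < d < q-1`, and `F₁,…,F_r` are linearly
independent homogeneous polynomials of degree `d` in `F_q[x₀,…,x_m]` such that some
pair has no nonconstant common factor, then `|V(F₁,…,F_r)| < (d-1)q^(m-1) + p_(m-2)`. -/
theorem low_correlation_case1 (q d m r : ℕ) {K : Type} [Field K] [Fintype K]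
    (hq : Fintype.card K = q) (hm : 1 ≤ m) (hr : 1 < r) (hd : 1 < d) (hdq : d < q - 1)
    (Fs : Fin r → MvPolynomial (Fin (m + 1)) K)
    (hli : LinearIndependent K Fs) (hhom : ∀ i, (Fs i).IsHomogeneous d)
    (hcop : ∃ i j, i ≠ j ∧
      ∀ E : MvPolynomial (Fin (m + 1)) K, E ∣ Fs i → E ∣ Fs j → IsUnit E) :
    Set.ncard {x : Projectivization K (Fin (m + 1) → K) | ∀ i, eval x.rep (Fs i) = 0}
      < (d - 1) * q ^ (m - 1) + pp q ((m : ℤ) - 2) := by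
  classical
  obtain ⟨i, j, hij, hcop⟩ := hcop
  obtain ⟨k, rfl⟩ : ∃ k, m = k + 1 := ⟨m - 1, by lia⟩
  have hbound := card_commonZeros_le (by lia) (by lia) (hli.ne_zero i) (hhom i) (hhom j)
    fun E => hcop E
  have hproj := ncard_mul_add_one_le (by lia) (hhom i) (hhom j)
    {x : Projectivization K (Fin (k + 1 + 1) → K) | ∀ i, eval x.rep (Fs i) = 0}
    fun x hx => ⟨hx i, hx j⟩
  rw [hq] at hbound hproj
  set V := Set.ncard {x : Projectivization K (Fin (k + 1 + 1) → K) | ∀ i, eval x.rep (Fs i) = 0}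
  have hpp : pp q (((k + 1 : ℕ) : ℤ) - 2) = ∑ i ∈ Finset.range k, q ^ i := by
    unfold pp
    split_ifs with h
    · rw [show k = 0 by lia, Finset.sum_range_zero]
    · rw [show (((k + 1 : ℕ) : ℤ) - 2).toNat + 1 = k by lia]
  have hgeom : (∑ i ∈ Finset.range k, q ^ i) * (q - 1) + 1 = q ^ k := by
    rw [Nat.geomSum_eq (by lia), Nat.div_mul_cancel (Nat.sub_one_dvd_pow_sub_one q k)]
    exact Nat.sub_add_cancel (Nat.one_le_pow _ _ (by lia))
  rw [hpp, Nat.add_sub_cancel, ← hgeom]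
  set p := ∑ i ∈ Finset.range k, q ^ i
  rw [pow_succ q, ← hgeom] at hbound
  obtain ⟨t, rfl⟩ : ∃ t, q = t + 1 := ⟨q - 1, by lia⟩
  obtain ⟨s, rfl⟩ : ∃ s, d = s + 1 := ⟨d - 1, by lia⟩
  simp only [Nat.add_sub_cancel] at *
  set N := Fintype.card {x : Fin (k + 1 + 1) → K // eval x (Fs i) = 0 ∧ eval x (Fs j) = 0}
  have hN : N + (s + 1) ^ 2 ≤ (s + 1) ^ 2 * (p * t + 1) + 1 :=
    Nat.le_of_mul_le_mul_left (hbound.trans (by ring_nf; rfl)) (Nat.succ_pos t)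
  have hV : V ≤ (s + 1) ^ 2 * p := by
    refine Nat.le_of_mul_le_mul_right (c := t) ?_ (by lia)
    linarith
  have hst : p * (s * (s + 2)) ≤ p * (s * t) := by gcongr; lia
  calc V ≤ p * (s * (s + 2)) + p := hV.trans_eq (by ring)
    _ ≤ p * (s * t) + p := by gcongr
    _ < s * (p * t + 1) + p := by
      have : p * (s * t) = s * (p * t) := by ring
      rw [mul_add, ← this]
      lia
end

section
/- Assume $1 < d < q$, $1 \le r \le m+1$, and let $F_1, \dots, F_r$ be linearly independent homogeneous polynomials of degree $d$ in $\mathbb{F}_q[x_0,\dots,x_m]$ with $\deg \gcd(F_i, F_j) = d-1$ for all $i \ne j$, $\deg \gcd(F_1,\dots,F_r) < d-1$, and such that $F_1, \dots, F_r$ have no common linear factor. Then $|V(F_1, \dots, F_r)| < (d-1)q^{m-1} + p_{m-2} + \lfloor q^{m-r} \rfloor$. -/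
open MvPolynomial

namespace MvPolynomial

theorem IsHomogeneous.of_mul_left {σ R : Type*} [CommRing R] [IsDomain R]
    {D a : MvPolynomial σ R} {n k : ℕ} (hD : D.IsHomogeneous n) (hD0 : D ≠ 0)
    (h : (D * a).IsHomogeneous (n + k)) : a.IsHomogeneous k := by
  have key : D * a = D * homogeneousComponent k a := by
    have h1 : homogeneousComponent (n + k) (D * a) = D * a := homogeneousComponent_eq_self h
    rw [← h1]
    conv_lhs => rw [← sum_homogeneousComponent a, Finset.mul_sum, map_sum]
    have h2 : ∀ i, homogeneousComponent (n + k) (D * homogeneousComponent i a)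
        = if i = k then D * homogeneousComponent k a else 0 := by
      intro i
      rw [homogeneousComponent_of_mem (hD.mul (homogeneousComponent_isHomogeneous i a))]
      by_cases hik : i = k
      · simp [hik]
      · simp [hik, Ne.symm hik]
    simp only [h2, Finset.sum_ite_eq', Finset.mem_range]
    split_ifs with hk
    · rfl
    · rw [homogeneousComponent_eq_zero k a (by omega), mul_zero]
  rw [mul_left_cancel₀ hD0 key]
  exact homogeneousComponent_isHomogeneous k a

/-- The scaling rule for the values of a homogeneous polynomial. -/
theorem IsHomogeneous.eval_smul_eq_s15 {σ R : Type*} [CommSemiring R] {p : MvPolynomial σ R} {n : ℕ}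
    (hp : p.IsHomogeneous n) (u : R) (v : σ → R) : eval (u • v) p = u ^ n * eval v p := by
  rw [eval_eq, eval_eq, Finset.mul_sum]
  refine Finset.sum_congr rfl fun s hs => ?_
  rw [hp.degree_eq_sum_deg_support hs, ← Finset.prod_pow_eq_pow_sum]
  simp only [Pi.smul_apply, smul_eq_mul, mul_pow, Finset.prod_mul_distrib]
  ring

theorem ncard_eval_eq_zero_inter_of_linearIndependent {K : Type*} [Field K] [Fintype K] {n : ℕ}
    {a b : MvPolynomial (Fin n) K} (ha : a.IsHomogeneous 1) (hb : b.IsHomogeneous 1)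
    (hab : LinearIndependent K ![a, b]) :
    Set.ncard {v : Fin n → K | eval v a = 0 ∧ eval v b = 0} = Fintype.card K ^ (n - 2) := by
  rw [← mem_homogeneousSubmodule, homogeneousSubmodule_one_eq_span_X,
    Submodule.mem_span_range_iff_exists_fun] at ha hb
  obtain ⟨s, rfl⟩ := ha
  obtain ⟨t, rfl⟩ := hb
  let φ : (Fin n → K) → Module.Dual K (Fin n → K) := fun c => ∑ i, c i • LinearMap.proj i
  have hφ : ∀ c v, φ c v = eval v (∑ i, c i • X i) := by
    intro c v
    simp [φ, smul_eval]
  have hφi : ∀ c i, φ c (Pi.single i 1) = c i := by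
    intro c i
    simp [φ, Pi.single_apply]
  have hli : LinearIndependent K ![φ s, φ t] := by
    rw [LinearIndependent.pair_iff] at hab ⊢
    intro x y hxy
    refine hab x y ?_
    rw [Finset.smul_sum, Finset.smul_sum, ← Finset.sum_add_distrib]
    refine Finset.sum_eq_zero fun i _ => ?_
    have := LinearMap.congr_fun hxy (Pi.single i 1)
    simp only [LinearMap.add_apply, LinearMap.smul_apply, hφi, smul_eq_mul,
      LinearMap.zero_apply] at this
    rw [smul_smul, smul_smul, ← add_smul, this, zero_smul]
  let W : Subspace K (Module.Dual K (Fin n → K)) := Submodule.span K (Set.range ![φ s, φ t])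
  have hW : Module.finrank K W = 2 := by
    simpa using finrank_span_eq_card hli
  have hfin := Subspace.finrank_add_finrank_dualCoannihilator_eq W
  rw [hW, Module.finrank_fin_fun] at hfin
  have hset : {v : Fin n → K | eval v (∑ i, s i • X i) = 0 ∧ eval v (∑ i, t i • X i) = 0}
      = (W.dualCoannihilator : Set (Fin n → K)) := by
    ext v
    simp only [← hφ, W, Submodule.coe_dualCoannihilator_span, Set.mem_ofPred_eq,
      Set.forall_mem_range]
    simp [Fin.forall_fin_two]
  have hcard := Module.natCard_eq_pow_finrank (K := K) (V := W.dualCoannihilator)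
  rw [hset, ← Nat.card_coe_set_eq]
  rw [Nat.card_eq_fintype_card (α := K)] at hcard
  rw [show n - 2 = Module.finrank K W.dualCoannihilator by omega]
  exact hcard

theorem ncard_eval_eq_zero_le {K : Type*} [Field K] [Fintype K] {n : ℕ}
    {p : MvPolynomial (Fin (n + 1)) K} (hp : p ≠ 0) :
    Set.ncard {v : Fin (n + 1) → K | eval v p = 0} ≤ p.totalDegree * Fintype.card K ^ n := by
  classical
  have h := schwartz_zippel_totalDegree hp (Finset.univ : Finset K)
  have hq : (0 : ℚ≥0) < Fintype.card K := by exact_mod_cast Fintype.card_pos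
  rw [Finset.card_univ, div_le_div_iff₀ (pow_pos hq _) hq, pow_succ, ← mul_assoc,
    mul_le_mul_iff_left₀ hq] at h
  have hset : {v : Fin (n + 1) → K | eval v p = 0}
      = (({f ∈ Fintype.piFinset fun _ ↦ Finset.univ | eval f p = 0} :
        Finset (Fin (n + 1) → K)) : Set (Fin (n + 1) → K)) := by
    ext v; simp
  rw [hset, Set.ncard_coe_finset]
  exact_mod_cast h

theorem ncard_projective_zeros_mul_le {K ι : Type*} [Field K] [Fintype K] {n d : ℕ}
    (F : ι → MvPolynomial (Fin n) K) (hF : ∀ i, (F i).IsHomogeneous d) :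
    Set.ncard {x : Projectivization K (Fin n → K) | ∀ i, eval x.rep (F i) = 0}
        * (Fintype.card K - 1)
      ≤ Set.ncard {v : Fin n → K | v ≠ 0 ∧ ∀ i, eval v (F i) = 0} := by
  classical
  rw [← Fintype.card_units, ← Nat.card_eq_fintype_card, ← Set.ncard_univ, ← Set.ncard_prod]
  refine Set.ncard_le_ncard_of_injOn (fun y => (y.2 : K) • y.1.rep) ?_ ?_
  · rintro ⟨x, u⟩ ⟨hx, -⟩
    refine ⟨smul_ne_zero u.ne_zero x.rep_nonzero, fun i => ?_⟩
    rw [(hF i).eval_smul_eq_s15, hx i, mul_zero]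
  · rintro ⟨x, u⟩ - ⟨y, w⟩ - h
    simp only at h
    have hxy : x = y := by
      rw [← x.mk_rep, ← y.mk_rep, Projectivization.mk_eq_mk_iff']
      refine ⟨(u : K)⁻¹ * w, ?_⟩
      rw [mul_smul, ← h, smul_smul, inv_mul_cancel₀ u.ne_zero, one_smul]
    subst hxy
    have := smul_left_injective K x.rep_nonzero h
    rw [Units.ext this]

/-- Three forms of degree `g + 2` any two of which have a common factor of degree `g + 1`, while
the gcd of the first two does not divide the third, are products of a common form of degree `g`
with two linear forms each, all from a list of pairwise independent ones. -/
theorem exists_linear_factorization_of_close {K σ : Type*} [Field K]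
    {F₁ F₂ F₃ D E : MvPolynomial σ K} {g : ℕ}
    (h₁ : F₁.IsHomogeneous (g + 2)) (h₂ : F₂.IsHomogeneous (g + 2)) (h₃ : F₃.IsHomogeneous (g + 2))
    (h₁₂ : LinearIndependent K ![F₁, F₂]) (h₁₃ : LinearIndependent K ![F₁, F₃])
    (hD : D.IsHomogeneous (g + 1)) (hE : E.IsHomogeneous (g + 1))
    (hD1 : D ∣ F₁) (hD2 : D ∣ F₂) (hE1 : E ∣ F₁) (hE3 : E ∣ F₃) (hD3 : ¬ D ∣ F₃) :
    ∃ a b c e G : MvPolynomial σ K, a.IsHomogeneous 1 ∧ b.IsHomogeneous 1 ∧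
      c.IsHomogeneous 1 ∧ e.IsHomogeneous 1 ∧ G.IsHomogeneous g ∧ G ≠ 0 ∧
      F₁ = a * c * G ∧ F₂ = b * c * G ∧ F₃ = a * e * G ∧ LinearIndependent K ![a, b] ∧
      LinearIndependent K ![a, c] ∧ LinearIndependent K ![c, e] := by
  have h10 : F₁ ≠ 0 := h₁₂.ne_zero 0
  obtain ⟨a, rfl⟩ := hD1
  obtain ⟨b, rfl⟩ := hD2
  obtain ⟨c, hc⟩ := hE1
  obtain ⟨e, rfl⟩ := hE3
  have hD0 : D ≠ 0 := left_ne_zero_of_mul h10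
  have ha0 : a ≠ 0 := right_ne_zero_of_mul h10
  have hE0 : E ≠ 0 := by rintro rfl; simp [hc] at h10
  have hc0 : c ≠ 0 := by rintro rfl; simp [hc] at h10
  have ha : a.IsHomogeneous 1 := hD.of_mul_left hD0 h₁
  have hb : b.IsHomogeneous 1 := hD.of_mul_left hD0 h₂
  have hch : c.IsHomogeneous 1 := hE.of_mul_left hE0 (hc ▸ h₁)
  have he : e.IsHomogeneous 1 := hE.of_mul_left hE0 h₃
  have prime_of : ∀ p : MvPolynomial σ K, p.IsHomogeneous 1 → p ≠ 0 → Prime p := by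
    intro p hp hp0
    refine (irreducible_of_totalDegree_eq_one (hp.totalDegree hp0) fun x hx => ?_).prime
    obtain ⟨i, hi⟩ := exists_coeff_ne_zero hp0
    exact isUnit_iff_ne_zero.mpr fun h => hi (zero_dvd_iff.mp (h ▸ hx i))
  have hac : ¬ a ∣ c := by
    rintro ⟨w, rfl⟩
    have hw : IsUnit w := ((prime_of _ hch hc0).irreducible.isUnit_or_isUnit rfl).resolve_left
      (prime_of a ha ha0).not_isUnit
    obtain rfl : D = E * w := mul_right_cancel₀ ha0 (by rw [hc]; ring)
    exact hD3 (hw.mul_right_dvd.mpr (dvd_mul_right E e))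
  obtain ⟨G, rfl⟩ := ((prime_of a ha ha0).dvd_or_dvd (hc ▸ dvd_mul_left a D)).resolve_right hac
  obtain rfl : D = c * G := mul_right_cancel₀ ha0 (by rw [hc]; ring)
  have hG0 : G ≠ 0 := right_ne_zero_of_mul hE0
  have pull : ∀ x y u v w : MvPolynomial σ K, LinearIndependent K ![x, y] → x = u * w → y = v * w →
      LinearIndependent K ![u, v] := by
    intro x y u v w h hx hy
    rw [LinearIndependent.pair_iff] at h ⊢
    intro s t hst
    refine h s t ?_
    rw [hx, hy, ← smul_mul_assoc, ← smul_mul_assoc, ← add_mul, hst, zero_mul]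
  refine ⟨a, b, c, e, G, ha, hb, hch, he, ha.of_mul_left ha0 (by rwa [add_comm] at hE), hG0,
    by ring, by ring, by ring, pull _ _ a b (c * G) h₁₂ (by ring) (by ring), ?_,
    pull _ _ c e (a * G) h₁₃ (by ring) (by ring)⟩
  rw [LinearIndependent.pair_iff' ha0]
  intro s hs
  exact hac ⟨C s, by rw [← hs, smul_eq_C_mul, mul_comm]⟩

end MvPolynomial

theorem pp_mul_pred (q : ℕ) (hq : 1 ≤ q) (m : ℕ) (hm : 1 ≤ m) :
    pp q ((m : ℤ) - 2) * (q - 1) + 1 = q ^ (m - 1) := by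
  obtain ⟨n, rfl⟩ : ∃ n, m = n + 1 := ⟨m - 1, by omega⟩
  have h : pp q (((n + 1 : ℕ) : ℤ) - 2) = ∑ i ∈ Finset.range n, q ^ i := by
    unfold pp
    split_ifs with hn
    · obtain rfl : n = 0 := by omega
      simp
    · congr 2
      omega
  rw [h, geom_sum_mul_of_one_le hq, Nat.sub_add_cancel (Nat.one_le_pow _ _ hq), Nat.add_sub_cancel]

/-- High correlation, second subcase: assume `1 < d < q`, `1 ≤ r ≤ m+1`, and let
`F₁,…,F_r` be linearly independent homogeneous polynomials of degree `d` in
`F_q[x₀,…,x_m]` such that any two have a gcd of degree `d-1`, every common factor of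
all of them has degree `< d-1`, and they have no common linear factor. Then
`|V(F₁,…,F_r)| < (d-1)q^(m-1) + p_(m-2) + ⌊q^(m-r)⌋`. -/
theorem high_correlation_case2 (q d m r : ℕ) {K : Type} [Field K] [Fintype K]
    (hq : Fintype.card K = q) (hm : 1 ≤ m) (hd : 1 < d) (hdq : d < q)
    (hr : 1 ≤ r) (hrm : r ≤ m + 1)
    (Fs : Fin r → MvPolynomial (Fin (m + 1)) K)
    (hli : LinearIndependent K Fs) (hhom : ∀ i, (Fs i).IsHomogeneous d)
    (hgcd : ∀ i j, i ≠ j → ∃ D : MvPolynomial (Fin (m + 1)) K,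
      D.IsHomogeneous (d - 1) ∧ D ∣ Fs i ∧ D ∣ Fs j ∧
      ∀ E : MvPolynomial (Fin (m + 1)) K, E ∣ Fs i → E ∣ Fs j → E ∣ D)
    (hgcdall : ∀ E : MvPolynomial (Fin (m + 1)) K, (∀ i, E ∣ Fs i) →
      E.totalDegree < d - 1)
    (hnolin : ¬ ∃ H : MvPolynomial (Fin (m + 1)) K,
      H.IsHomogeneous 1 ∧ H ≠ 0 ∧ ∀ i, H ∣ Fs i) :
    Set.ncard {x : Projectivization K (Fin (m + 1) → K) | ∀ i, eval x.rep (Fs i) = 0}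
      < (d - 1) * q ^ (m - 1) + pp q ((m : ℤ) - 2) + flq q m r := by
  have hi : ∀ i, ∃ j, ¬ Fs i ∣ Fs j := by
    intro i
    by_contra! h
    have h1 := hgcdall (Fs i) h
    rw [(hhom i).totalDegree (hli.ne_zero i)] at h1
    omega
  have pair : ∀ i j, i ≠ j → LinearIndependent K ![Fs i, Fs j] := by
    intro i j hij
    have h := hli.comp ![i, j] (by
      intro x y hxy
      fin_cases x <;> fin_cases y <;> simp_all)
    convert h using 1
    ext x
    fin_cases x <;> rfl
  obtain ⟨i₂, hi₂⟩ := hi ⟨0, hr⟩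
  set i₁ : Fin r := ⟨0, hr⟩
  have h12 : i₁ ≠ i₂ := by rintro h; exact hi₂ (h ▸ dvd_rfl)
  obtain ⟨D, hD, hD1, hD2, -⟩ := hgcd i₁ i₂ h12
  obtain ⟨i₃, hi₃⟩ : ∃ k, ¬ D ∣ Fs k := by
    by_contra! h
    have h1 := hgcdall D h
    rw [hD.totalDegree (ne_zero_of_dvd_ne_zero (hli.ne_zero i₁) hD1)] at h1
    omega
  have h13 : i₁ ≠ i₃ := by rintro h; exact hi₃ (h ▸ hD1)
  obtain ⟨E, hE, hE1, hE3, -⟩ := hgcd i₁ i₃ h13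
  obtain ⟨g, rfl⟩ : ∃ g, d = g + 2 := ⟨d - 2, by omega⟩
  obtain ⟨a, b, c, e, G, ha, hb, hc, he, hG, hG0, h1, h2, h3, hab, hac, hce⟩ :=
    exists_linear_factorization_of_close (hhom i₁) (hhom i₂) (hhom i₃) (pair _ _ h12)
      (pair _ _ h13) hD hE hD1 hD2 hE1 hE3 hi₃
  have hsub : {v : Fin (m + 1) → K | v ≠ 0 ∧ ∀ i, eval v (Fs i) = 0} ⊆
      {v | eval v G = 0} ∪ ({v | eval v a = 0 ∧ eval v b = 0} \ {0} ∪
        ({v | eval v a = 0 ∧ eval v c = 0} \ {0} ∪ {v | eval v c = 0 ∧ eval v e = 0} \ {0})) := by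
    rintro v ⟨hv0, hv⟩
    have e1 := hv i₁
    have e2 := hv i₂
    have e3 := hv i₃
    simp only [h1, h2, h3, map_mul, mul_eq_zero] at e1 e2 e3
    simp only [Set.mem_union, Set.mem_sdiff, Set.mem_ofPred_eq, Set.mem_singleton_iff]
    rcases e1 with (e1 | e1) | e1 <;> rcases e2 with (e2 | e2) | e2 <;>
      rcases e3 with (e3 | e3) | e3 <;> simp [e1, e2, e3, hv0]
  have hdiff : ∀ x y : MvPolynomial (Fin (m + 1)) K, x.IsHomogeneous 1 → y.IsHomogeneous 1 →
      LinearIndependent K ![x, y] →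
      Set.ncard ({v : Fin (m + 1) → K | eval v x = 0 ∧ eval v y = 0} \ {0}) + 1 = q ^ (m - 1) := by
    intro x y hx hy hxy
    have hz : ∀ p : MvPolynomial (Fin (m + 1)) K, p.IsHomogeneous 1 →
        eval (0 : Fin (m + 1) → K) p = 0 := by
      intro p hp
      simpa using hp.eval_smul_eq_s15 0 0
    have h0 : (0 : Fin (m + 1) → K) ∈ {v | eval v x = 0 ∧ eval v y = 0} := ⟨hz x hx, hz y hy⟩
    rw [Set.ncard_sdiff_singleton_add_one h0,
      ncard_eval_eq_zero_inter_of_linearIndependent hx hy hxy, hq]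
    rfl
  have hb1 := hdiff a b ha hb hab
  have hb2 := hdiff a c ha hc hac
  have hb3 := hdiff c e hc he hce
  have hb4 := ncard_eval_eq_zero_le hG0
  rw [hG.totalDegree hG0, hq] at hb4
  have hproj := ncard_projective_zeros_mul_le Fs hhom
  have hle := Set.ncard_le_ncard hsub
  have hu1 := Set.ncard_union_le {v : Fin (m + 1) → K | eval v G = 0}
    ({v | eval v a = 0 ∧ eval v b = 0} \ {0} ∪
      ({v | eval v a = 0 ∧ eval v c = 0} \ {0} ∪ {v | eval v c = 0 ∧ eval v e = 0} \ {0}))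
  have hu2 := Set.ncard_union_le ({v : Fin (m + 1) → K | eval v a = 0 ∧ eval v b = 0} \ {0})
    ({v | eval v a = 0 ∧ eval v c = 0} \ {0} ∪ {v | eval v c = 0 ∧ eval v e = 0} \ {0})
  have hu3 := Set.ncard_union_le ({v : Fin (m + 1) → K | eval v a = 0 ∧ eval v c = 0} \ {0})
    ({v | eval v c = 0 ∧ eval v e = 0} \ {0})
  have hpp := pp_mul_pred q (by omega) m hm
  have hpow : q ^ m = q ^ (m - 1) * q := by rw [← pow_succ, Nat.sub_add_cancel hm]
  rw [hq] at hproj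
  set N := Set.ncard {x : Projectivization K (Fin (m + 1) → K) | ∀ i, eval x.rep (Fs i) = 0}
  set P := pp q ((m : ℤ) - 2)
  have hN : N * (q - 1) + 3 ≤ g * q ^ m + 3 * q ^ (m - 1) := by omega
  refine lt_of_lt_of_le (Nat.lt_of_mul_lt_mul_right (a := q - 1) ?_) (Nat.le_add_right _ _)
  obtain ⟨k, rfl⟩ : ∃ k, q = g + 3 + k := ⟨q - (g + 3), by omega⟩
  rw [hpow] at hN
  simp only [show g + 3 + k - 1 = g + 2 + k by omega, show g + 2 - 1 = g + 1 by omega]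
    at hN hpp ⊢
  generalize (g + 3 + k) ^ (m - 1) = Q at *
  rw [add_mul, ← Nat.add_lt_add_iff_right (k := 1), add_assoc _ _ 1, hpp]
  nlinarith [Nat.zero_le (k * Q)]
end
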